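/- arXiv:0901.0805 — 3 statements merged into one kernel-verified Lean document; each statement's English description precedes it below -/
import Mathlib

section
/- Let $G$ be a finite group, $p$ a prime, and $H$ a strongly $p$-embedded subgroup of $G$ such that $H$ contains an elementary abelian subgroup of order $p^2$ (i.e., $m_p(H) \ge 2$). Then $O_{p'}(G) = \bigcap_{g \in G} H^g$; in particular $O_{p'}(G) \le H$. -/
/-- The conjugate subgroup `g H g⁻¹`. -/
def conjSub {G : Type*} [Group G] (g : G) (H : Subgroup G) : Subgroup G :=
  Subgroup.map (MulAut.conj g).toMonoidHom H

/-- `H` is a strongly `p`-embedded subgroup of `G` : `H < G`, `p` divides `|H|`, and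
`p` does not divide `|H ∩ H^g|` for every `g ∈ G \ H`. -/
def IsStronglyPEmbedded {G : Type*} [Group G] (p : ℕ) (H : Subgroup G) : Prop :=
  H ≠ ⊤ ∧ (p ∣ Nat.card H) ∧ ∀ g : G, g ∉ H → ¬ (p ∣ Nat.card ↥(H ⊓ conjSub g H))

/-- `O_{p'}(G)`, the largest normal `p'`-subgroup of `G`. -/
def pPrimeCore (p : ℕ) (G : Type*) [Group G] : Subgroup G :=
  sSup {N : Subgroup G | N.Normal ∧ ¬ (p ∣ Nat.card N)}

/-- `m_p(H) ≥ 2` : `H` contains an elementary abelian subgroup of order `p ^ 2`. -/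
def HasElemAbelianRankTwo {G : Type*} [Group G] (p : ℕ) (H : Subgroup G) : Prop :=
  ∃ A : Subgroup G, A ≤ H ∧ Nat.card A = p ^ 2 ∧ ∀ a ∈ A, a ^ p = 1

/-- The norm of `z` under an automorphism of order dividing `p` is a fixed point. -/
theorem aux_norm_fixed {Z : Type*} [CommGroup Z] (p : ℕ) (γ : MulAut Z) (hγ : γ ^ p = 1) (z : Z) :
    γ (∏ i ∈ Finset.range p, (γ ^ i) z) = ∏ i ∈ Finset.range p, (γ ^ i) z := by
  rw [map_prod]
  have h1 : ∀ i, γ ((γ ^ i) z) = (γ ^ (i + 1)) z := fun i => by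
    rw [pow_succ', MulAut.mul_apply]
  simp_rw [h1]
  have h2 := Finset.prod_range_succ (fun i => (γ ^ i) z) p
  rw [Finset.prod_range_succ'] at h2
  simpa [hγ] using h2

theorem aux_comm {Z : Type*} [CommGroup Z] (p : ℕ) (hp : 0 < p) (α β : MulAut Z)
    (hc : Commute α β) (hα : α ^ p = 1) (hβ : β ^ p = 1)
    (h1 : ∀ i, 0 < i → i < p → ∀ z, (β ^ i) z = z → z = 1)
    (h2 : ∀ j, ∀ z, (α * β ^ j) z = z → z = 1) (z : Z) : z ^ p = 1 := by
  have e1 : ∏ j ∈ Finset.range p, ∏ i ∈ Finset.range p, ((α * β ^ j) ^ i) z = 1 := by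
    refine Finset.prod_eq_one fun j _ => ?_
    refine h2 j _ (aux_norm_fixed p _ ?_ z)
    rw [(hc.pow_right j).mul_pow, hα, ← pow_mul, mul_comm j p, pow_mul, hβ, one_pow, one_mul]
  rw [Finset.prod_comm] at e1
  obtain ⟨k, rfl⟩ : ∃ k, p = k + 1 := ⟨p - 1, by omega⟩
  rw [Finset.prod_range_succ'] at e1
  have e2 : ∀ i ∈ Finset.range k,
      ∏ j ∈ Finset.range (k + 1), ((α * β ^ j) ^ (i + 1)) z = 1 := by
    intro i hi
    have hi' := Finset.mem_range.1 hi
    have e3 : ∀ j, ((α * β ^ j) ^ (i + 1)) z = (α ^ (i + 1)) (((β ^ (i + 1)) ^ j) z) := by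
      intro j
      rw [(hc.pow_right j).mul_pow, ← pow_mul, mul_comm j, pow_mul, MulAut.mul_apply]
    simp_rw [e3]
    rw [← map_prod]
    rw [h1 (i + 1) (by omega) (by omega) _ (aux_norm_fixed (k + 1) (β ^ (i + 1)) ?_ z), map_one]
    rw [← pow_mul, mul_comm, pow_mul, hβ, one_pow]
  rw [Finset.prod_eq_one e2] at e1
  simpa using e1

theorem aux_pgroup {R : Type*} [Group R] (M : Subgroup R) [Finite M] (p q : ℕ) (hp : p.Prime)
    (hq : q.Prime) (hM : IsPGroup q M) (hpM : ¬ p ∣ Nat.card M) (hM1 : M ≠ ⊥) (a b : R)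
    (ha : a ∈ Subgroup.normalizer (M : Set R)) (hb : b ∈ Subgroup.normalizer (M : Set R))
    (hc : Commute a b) (hap : a ^ p = 1) (hbp : b ^ p = 1) :
    ∃ m ∈ M, m ≠ 1 ∧ ((∃ i, 0 < i ∧ i < p ∧ Commute m (b ^ i)) ∨ ∃ j : ℕ, Commute m (a * b ^ j)) := by
  by_contra! hcon
  have : Fact q.Prime := ⟨hq⟩
  have : Nontrivial M := (Subgroup.nontrivial_iff_ne_bot M).2 hM1
  have := hM.center_nontrivial
  let φ : MulAut M →* MulAut (Subgroup.center M) :=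
    { toFun := fun e => Subgroup.centerCongr e
      map_one' := by ext; rfl
      map_mul' := fun _ _ => by ext; rfl }
  let ψ := φ.comp M.normalizerMonoidHom
  have hψ : ∀ (x) (z : Subgroup.center M), ((ψ x z : M) : R) = x * (z : M) * (x : R)⁻¹ :=
    fun x z => rfl
  let a' : Subgroup.normalizer (M : Set R) := ⟨a, ha⟩
  let b' : Subgroup.normalizer (M : Set R) := ⟨b, hb⟩
  have hc' : Commute a' b' := Subtype.ext hc
  have hfix : ∀ x (z : Subgroup.center M), ψ x z = z → Commute ((z : M) : R) x := by
    intro x z h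
    have := hψ x z
    rw [h, eq_mul_inv_iff_mul_eq] at this
    exact this
  obtain ⟨z, hz⟩ := exists_ne (1 : Subgroup.center M)
  have hne : ∀ z : Subgroup.center M, z ≠ 1 → ((z : M) : R) ≠ 1 := by
    intro z hz h
    exact hz (Subtype.ext (Subtype.ext h))
  let _ : CommGroup (Subgroup.center M) :=
    { (inferInstance : Group (Subgroup.center M)) with
      mul_comm := fun x y => Subtype.ext (Subgroup.mem_center_iff.1 y.2 x) }
  have hzp : z ^ p = 1 := by
    refine aux_comm p hp.pos (ψ a') (ψ b') (hc'.map ψ) ?_ ?_ ?_ ?_ z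
    · rw [← map_pow, show a' ^ p = 1 from Subtype.ext hap, map_one]
    · rw [← map_pow, show b' ^ p = 1 from Subtype.ext hbp, map_one]
    · intro i hi hip y hy
      by_contra hy1
      rw [← map_pow] at hy
      exact (hcon y (y : M).2 (hne y hy1)).1 i hi hip (hfix _ y hy)
    · intro j y hy
      by_contra hy1
      rw [← map_pow, ← map_mul] at hy
      exact (hcon y (y : M).2 (hne y hy1)).2 j (hfix _ y hy)
  apply hpM
  have : Fact p.Prime := ⟨hp⟩
  rw [← orderOf_eq_prime hzp hz, ← Subgroup.orderOf_coe]
  exact orderOf_dvd_natCard _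

/-- Elements of order `p` of a strongly `p`-embedded subgroup control fusion. -/
theorem aux_strong {G : Type*} [Group G] [Finite G] (p : ℕ) (hp : p.Prime) (H : Subgroup G)
    (hH : IsStronglyPEmbedded p H) (c x : G) (hc : c ∈ H) (hc1 : c ≠ 1) (hcp : c ^ p = 1)
    (hx : x⁻¹ * c * x ∈ H) : x ∈ H := by
  by_contra hxH
  apply hH.2.2 x hxH
  have : Fact p.Prime := ⟨hp⟩
  have hmem : c ∈ H ⊓ conjSub x H := by
    refine ⟨hc, x⁻¹ * c * x, hx, ?_⟩
    simp [mul_assoc]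
  rw [← orderOf_eq_prime hcp hc1, ← Subgroup.orderOf_mk c hmem]
  exact orderOf_dvd_natCard _

theorem aux_quot' {R S : Type*} [Group R] [Finite R] [Group S] (π : R →* S) (K L : Subgroup R)
    (hker : ∀ y, π y = 1 ↔ y ∈ K) (p q : ℕ)
    (hp : p.Prime) (hq : q.Prime) (hL : IsPGroup q L) (hpL : ¬ p ∣ Nat.card L)
    (x : R) (hx : x ∈ L) (hxK : x ∉ K) (a b : R)
    (ha : a ∈ Subgroup.normalizer (L : Set R)) (hb : b ∈ Subgroup.normalizer (L : Set R))
    (hc : Commute a b) (hap : a ^ p = 1) (hbp : b ^ p = 1) :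
    ∃ l ∈ L, l ∉ K ∧ ((∃ i, 0 < i ∧ i < p ∧ (l * b ^ i)⁻¹ * (b ^ i * l) ∈ K) ∨
      ∃ j : ℕ, (l * (a * b ^ j))⁻¹ * ((a * b ^ j) * l) ∈ K) := by
  have hnorm : ∀ c : R, c ∈ Subgroup.normalizer (L : Set R) →
      π c ∈ Subgroup.normalizer ((L.map π : Subgroup S) : Set S) := by
    intro c h
    exact Subgroup.le_normalizer_map π (Subgroup.mem_map_of_mem π h)
  have hcm : ∀ c l : R, Commute (π l) (π c) → (l * c)⁻¹ * (c * l) ∈ K := by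
    intro c l h
    rw [← hker, map_mul, map_inv, map_mul, map_mul, h.eq, inv_mul_cancel]
  have hfinite : Finite (L.map π) := Set.Finite.image π (Set.toFinite (L : Set R))
  have hbot : L.map π ≠ ⊥ := by
    intro hbot
    have h1 : π x ∈ L.map π := Subgroup.mem_map_of_mem π hx
    rw [hbot, Subgroup.mem_bot] at h1
    exact hxK ((hker x).1 h1)
  have hcard : Nat.card (L.map π) ∣ Nat.card L :=
    Subgroup.card_dvd_of_surjective (π.subgroupMap L) (π.subgroupMap_surjective L)
  have hpM : ¬ p ∣ Nat.card (L.map π) := fun h => hpL (dvd_trans h hcard)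
  have hap' : π a ^ p = 1 := by rw [← map_pow, hap, map_one]
  have hbp' : π b ^ p = 1 := by rw [← map_pow, hbp, map_one]
  obtain ⟨m, hmL, hm1, hm⟩ := aux_pgroup (L.map π) p q hp hq (hL.map π) hpM hbot
    (π a) (π b) (hnorm a ha) (hnorm b hb) (hc.map π) hap' hbp'
  obtain ⟨l, hl, hlm⟩ := Subgroup.mem_map.1 hmL
  rw [← hlm] at hm1 hm
  refine ⟨l, hl, fun h => hm1 ((hker l).2 h), ?_⟩
  rcases hm with ⟨i, hi, hip, hm⟩ | ⟨j, hm⟩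
  · exact Or.inl ⟨i, hi, hip, hcm _ _ (by rwa [map_pow])⟩
  · exact Or.inr ⟨j, hcm _ _ (by rwa [map_mul, map_pow])⟩

theorem aux_main {G : Type*} [Group G] [Finite G] (p q : ℕ) (hp : p.Prime) (hq : q.Prime)
    (H : Subgroup G) (hH : IsStronglyPEmbedded p H) (a b : G) (ha : a ∈ H) (hb : b ∈ H)
    (hc : Commute a b) (hap : a ^ p = 1) (hbp : b ^ p = 1) (hb1 : b ≠ 1)
    (hab : ∀ j : ℕ, a * b ^ j ≠ 1) (Q : Subgroup G) (hQ : IsPGroup q Q)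
    (hpQ : ¬ p ∣ Nat.card Q) (haQ : a ∈ Subgroup.normalizer (Q : Set G))
    (hbQ : b ∈ Subgroup.normalizer (Q : Set G)) : Q ≤ H := by
  have : Fact q.Prime := ⟨hq⟩
  have : Fact p.Prime := ⟨hp⟩
  by_contra hQH
  -- a nontrivial element of the normalizer
  have hlt : H.subgroupOf Q < ⊤ := lt_top_iff_ne_top.2 (fun h => hQH (Subgroup.subgroupOf_eq_top.1 h))
  have := hQ.isNilpotent
  obtain ⟨x, hxN, hxH⟩ := SetLike.exists_of_lt
    (Group.normalizerCondition_of_isNilpotent (G := Q) _ hlt)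
  set K : Subgroup G := Q ⊓ H with hK
  set R : Subgroup G := Subgroup.normalizer (K : Set G) with hR
  have hxR : (x : G) ∈ R := by
    rw [hR, Subgroup.mem_normalizer_iff]
    rw [Subgroup.mem_normalizer_iff] at hxN
    intro h
    constructor
    · rintro ⟨h1, h2⟩
      exact ⟨Q.mul_mem (Q.mul_mem x.2 h1) (Q.inv_mem x.2), (hxN ⟨h, h1⟩).1 h2⟩
    · rintro ⟨h1, h2⟩
      have h3 : h ∈ Q := by
        have := Q.mul_mem (Q.mul_mem (Q.inv_mem x.2) h1) x.2
        simpa [mul_assoc] using this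
      exact ⟨h3, (hxN ⟨h, h3⟩).2 h2⟩
  have hR' : ∀ c, c ∈ H → c ∈ Subgroup.normalizer (Q : Set G) → c ∈ R := by
    intro c h1 h2
    rw [hR, Subgroup.mem_normalizer_iff]
    intro h
    exact and_congr (Subgroup.mem_normalizer_iff.1 h2 h)
      (Subgroup.mem_normalizer_iff.1 (Subgroup.le_normalizer h1) h)
  have hLq : IsPGroup q (Q.subgroupOf R) := by
    intro l
    obtain ⟨k, hk⟩ := hQ ⟨((l : R) : G), l.2⟩
    exact ⟨k, Subtype.ext (Subtype.ext (congrArg (fun y : Q => (y : G)) hk))⟩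
  have hLp : Nat.card (Q.subgroupOf R) ∣ Nat.card Q :=
    Subgroup.card_comap_dvd_of_injective Q R.subtype R.subtype_injective
  have hn : (K.subgroupOf R).Normal := Subgroup.normal_in_normalizer
  have haR : a ∈ R := hR' a ha haQ
  have hbR : b ∈ R := hR' b hb hbQ
  clear_value R
  obtain ⟨l, hl, hlK, hm⟩ := aux_quot' (QuotientGroup.mk' (K.subgroupOf R)) (K.subgroupOf R) (Q.subgroupOf R)
    (fun y => QuotientGroup.eq_one_iff y) p q hp hq hLq
    (fun h => hpQ (h.trans hLp)) ⟨x, hxR⟩ x.2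
    (fun h => hxH (Subgroup.mem_subgroupOf.1 h).2) ⟨a, haR⟩ ⟨b, hbR⟩
    (Subgroup.mem_normalizer_iff.2 fun l => Subgroup.mem_normalizer_iff.1 haQ l)
    (Subgroup.mem_normalizer_iff.2 fun l => Subgroup.mem_normalizer_iff.1 hbQ l)
    (Subtype.ext hc) (Subtype.ext hap) (Subtype.ext hbp)
  have hfin : ∀ c : G, c ∈ H → c ≠ 1 → c ^ p = 1 → ((l : G) * c)⁻¹ * (c * l) ∈ H → False := by
    intro c h1 h2 h3 h7
    have h8 : (l : G) ∈ H := by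
      apply aux_strong p hp H hH c l h1 h2 h3
      have := H.mul_mem h1 h7
      simpa [mul_assoc] using this
    exact hlK (Subgroup.mem_subgroupOf.2 ⟨hl, h8⟩)
  rcases hm with ⟨i, hi, hip, hm⟩ | ⟨j, hm⟩
  · refine hfin (b ^ i) (H.pow_mem hb i) ?_ ?_ (Subgroup.mem_subgroupOf.1 hm).2
    · intro h9
      have := orderOf_dvd_of_pow_eq_one h9
      rw [orderOf_eq_prime hbp hb1] at this
      exact absurd (Nat.le_of_dvd hi this) (by omega)
    · rw [← pow_mul, mul_comm, pow_mul, hbp, one_pow]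
  · refine hfin (a * b ^ j) (H.mul_mem ha (H.pow_mem hb j)) (hab j) ?_
      (Subgroup.mem_subgroupOf.1 hm).2
    rw [(hc.pow_right j).mul_pow, hap, ← pow_mul, mul_comm j p, pow_mul, hbp, one_pow, one_mul]

open scoped Pointwise in
theorem aux_le {G : Type*} [Group G] [Finite G]
    (p : ℕ) (hp : p.Prime) (H : Subgroup G) (hH : IsStronglyPEmbedded p H)
    (hrank : HasElemAbelianRankTwo p H) (N : Subgroup G) [N.Normal] (hN : ¬ p ∣ Nat.card N) :
    N ≤ H := by
  have : Fact p.Prime := ⟨hp⟩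
  obtain ⟨A, hAH, hA, hAp⟩ := hrank
  have hcomm := IsPGroup.commutative_of_card_eq_prime_sq hA
  have hAP : IsPGroup p A := IsPGroup.of_card hA
  obtain ⟨b, hbA, hb1⟩ : ∃ b ∈ A, b ≠ 1 := by
    apply A.bot_or_exists_ne_one.resolve_left
    rintro rfl
    rw [Subgroup.card_bot] at hA
    have := hp.one_lt
    nlinarith
  obtain ⟨a, haA, hab⟩ : ∃ a ∈ A, a ∉ Subgroup.zpowers b := by
    by_contra! h
    have h1 : Nat.card A ∣ Nat.card (Subgroup.zpowers b) := Subgroup.card_dvd_of_le h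
    rw [Nat.card_zpowers, orderOf_eq_prime (hAp b hbA) hb1, hA] at h1
    have := Nat.le_of_dvd hp.pos h1
    have := hp.one_lt
    nlinarith
  rw [← Subgroup.subgroupOf_eq_top, ← Subgroup.index_eq_one]
  by_contra hidx
  obtain ⟨q, hq, hqd⟩ := Nat.exists_prime_and_dvd hidx
  have : Fact q.Prime := ⟨hq⟩
  let _ : MulAction A (Sylow q N) :=
    MulAction.compHom _ ((MulAut.conjNormal (H := N)).comp A.subtype)
  obtain ⟨P, hP⟩ := hAP.nonempty_fixed_point_of_prime_not_dvd_card (Sylow q N) (by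
    intro h
    exact hN (h.trans (((default : Sylow q N).card_dvd_index).trans (Subgroup.index_dvd_card _))))
  have hnorm : ∀ c ∈ A, c ∈ Subgroup.normalizer ((P.1.map N.subtype : Subgroup G) : Set G) := by
    intro c hcA
    have h1 : ∀ c ∈ A, ∀ y ∈ P.1.map N.subtype, c * y * c⁻¹ ∈ P.1.map N.subtype := by
      rintro c hcA _ ⟨y, hy, rfl⟩
      have h2 : (MulAut.conjNormal c : MulAut N) • P = P := hP ⟨c, hcA⟩
      have h3 : (MulAut.conjNormal c : MulAut N) • y ∈ (MulAut.conjNormal c : MulAut N) • P.1 :=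
        Subgroup.smul_mem_pointwise_smul _ _ _ hy
      rw [← Sylow.pointwise_smul_def, h2] at h3
      exact ⟨_, h3, MulAut.conjNormal_apply c y⟩
    rw [Subgroup.mem_normalizer_iff]
    intro y
    refine ⟨h1 c hcA y, fun h => ?_⟩
    have := h1 c⁻¹ (A.inv_mem hcA) _ h
    simpa [mul_assoc] using this
  have hPH : P.1.map N.subtype ≤ H := by
    refine aux_main p q hp hq H hH a b (hAH haA) (hAH hbA)
      (congrArg Subtype.val (hcomm ⟨a, haA⟩ ⟨b, hbA⟩)) (hAp a haA) (hAp b hbA) hb1 ?_ _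
      (P.2.map _) ?_ (hnorm a haA) (hnorm b hbA)
    · intro j h
      apply hab
      rw [eq_inv_of_mul_eq_one_left h]
      exact inv_mem (pow_mem (Subgroup.mem_zpowers b) j)
    · intro h
      exact hN (h.trans ((Subgroup.card_map_dvd _ _).trans (Subgroup.card_subgroup_dvd_card _)))
  have hle : P.1 ≤ H.subgroupOf N := fun y hy => hPH ⟨y, hy, rfl⟩
  exact P.not_dvd_index (hqd.trans (Subgroup.index_dvd_of_le hle))

theorem pPrimeCore_eq_core {G : Type*} [Group G] [Finite G]
    (p : ℕ) (hp : p.Prime) (H : Subgroup G) (hH : IsStronglyPEmbedded p H)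
    (hrank : HasElemAbelianRankTwo p H) :
    pPrimeCore p G = (⨅ g : G, conjSub g H) ∧ pPrimeCore p G ≤ H := by
  have hone : conjSub 1 H = H := by
    ext x; simp [conjSub]
  have hle : pPrimeCore p G ≤ ⨅ g : G, conjSub g H := by
    refine sSup_le ?_
    rintro N ⟨hN1, hN2⟩
    refine le_iInf fun g => ?_
    intro x hx
    refine ⟨g⁻¹ * x * g, aux_le p hp H hH hrank N hN2 ?_, ?_⟩
    · simpa using hN1.conj_mem x hx g⁻¹
    · simp [mul_assoc]
  refine ⟨le_antisymm hle (le_sSup ⟨⟨?_⟩, ?_⟩), hle.trans ((iInf_le _ 1).trans hone.le)⟩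
  · intro n hn g
    rw [Subgroup.mem_iInf] at hn ⊢
    intro k
    obtain ⟨h, hh, hhn⟩ := hn (g⁻¹ * k)
    refine ⟨h, hh, ?_⟩
    rw [← hhn]
    simp [mul_assoc]
  · intro hdvd
    obtain ⟨g, -, hg⟩ := SetLike.exists_of_lt (lt_top_iff_ne_top.2 hH.1)
    refine hH.2.2 g hg (hdvd.trans (Subgroup.card_dvd_of_le (le_inf ?_ (iInf_le _ g))))
    exact (iInf_le _ 1).trans hone.le
end

section
/- Let $G$ be a finite group, $p$ a prime with $m_p(H) \ge 2$, and $H$ a strongly $p$-embedded subgroup of $G$ with $O_{p'}(H) = 1$. Then $F^*(G)$ is a non-abelian simple group. -/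
/-- The Fitting subgroup: the largest normal nilpotent subgroup. -/
def fittingSubgroup (G : Type*) [Group G] : Subgroup G :=
  sSup {N : Subgroup G | N.Normal ∧ Group.IsNilpotent N}

/-- A subnormal subgroup: there is a chain `K ⊴ ⋯ ⊴ G`. -/
def IsSubnormal {G : Type*} [Group G] (K : Subgroup G) : Prop :=
  Relation.ReflTransGen
    (fun A B : Subgroup G => A ≤ B ∧ ∀ b ∈ B, ∀ a ∈ A, b * a * b⁻¹ ∈ A) K ⊤

/-- A quasisimple subgroup: perfect and simple modulo its centre. -/
def IsQuasisimple {G : Type*} [Group G] (L : Subgroup G) : Prop :=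
  commutator ↥L = ⊤ ∧ IsSimpleGroup (↥L ⧸ Subgroup.center ↥L)

/-- A component of `G`: a subnormal quasisimple subgroup. -/
def IsComponent {G : Type*} [Group G] (L : Subgroup G) : Prop :=
  IsSubnormal L ∧ IsQuasisimple L

/-- `E(G)`, the layer of `G`: the subgroup generated by the components. -/
def layerSub (G : Type*) [Group G] : Subgroup G :=
  sSup {L : Subgroup G | IsComponent L}

/-- `F^*(G) = F(G) E(G)`, the generalized Fitting subgroup. -/
def genFitting (G : Type*) [Group G] : Subgroup G :=
  fittingSubgroup G ⊔ layerSub G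

lemma prod_periodic_mul {V : Type*} [CommGroup V] (p : ℕ) (hp : p.Prime) (f : ℕ → V)
    (hf : ∀ n, f (n % p) = f n) (j : ℕ) (hj : ¬ p ∣ j) :
    ∏ i ∈ Finset.range p, f (i * j) = ∏ i ∈ Finset.range p, f i := by
  have hinj : Set.InjOn (fun i => i * j % p) (Finset.range p : Set ℕ) := by
    intro a ha b hb hab
    have ha' : a < p := by simpa using ha
    have hb' : b < p := by simpa using hb
    have h1 : a * j ≡ b * j [MOD p] := hab
    have h2 : a ≡ b [MOD p] :=
      Nat.ModEq.cancel_right_of_coprime ((Nat.Prime.coprime_iff_not_dvd hp).2 hj) h1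
    exact Nat.ModEq.eq_of_lt_of_lt h2 ha' hb'
  have himg : (Finset.range p).image (fun i => i * j % p) = Finset.range p := by
    apply Finset.eq_of_subset_of_card_le
    · intro x hx
      obtain ⟨i, _, rfl⟩ := Finset.mem_image.1 hx
      exact Finset.mem_range.2 (Nat.mod_lt _ hp.pos)
    · rw [Finset.card_image_of_injOn hinj]
  conv_rhs => rw [← himg]
  rw [Finset.prod_image hinj]
  exact Finset.prod_congr rfl fun i _ => (hf _).symm

lemma map_of_aut {X : Type*} [Group X] (σ : MulAut X) (z : X) :
    Abelianization.map σ.toMonoidHom (Abelianization.of z) = Abelianization.of (σ z) := by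
  simp

lemma lift_fixed {X : Type*} [Group X] [Finite X] (p : ℕ) (hp : p.Prime)
    (hX : ¬ p ∣ Nat.card X) (σ : MulAut X) (hσ : σ ^ p = 1) (M : Subgroup X)
    (hM : commutator X ≤ M) (hfix : ∀ z, σ z = z → z ∈ M) (z : X)
    (hz : Abelianization.of (σ z) = Abelianization.of z) : z ∈ M := by
  have := Fact.mk hp
  have key : ∀ w : X, Abelianization.of (MulAut.toPerm X σ w) = Abelianization.of z ↔
      Abelianization.of w = Abelianization.of z := by
    intro w
    constructor
    · intro h
      have h' : Abelianization.of (σ w) = Abelianization.of (σ z) := h.trans hz.symm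
      have := congrArg (Abelianization.map (σ⁻¹).toMonoidHom) h'
      rw [map_of_aut, map_of_aut] at this
      simpa using this
    · intro h
      have := congrArg (Abelianization.map σ.toMonoidHom) h
      rw [map_of_aut, map_of_aut] at this
      exact this.trans hz
  let T := {w : X // Abelianization.of w = Abelianization.of z}
  have := Fintype.ofFinite T
  have hcard : ¬ p ∣ Fintype.card T := by
    rw [← Nat.card_eq_fintype_card]
    let e : T ≃ (Abelianization.of (G := X)).ker :=
      { toFun := fun w => ⟨z⁻¹ * w.1, by rw [MonoidHom.mem_ker, map_mul, map_inv, w.2]; simp⟩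
        invFun := fun c => ⟨z * c.1, by rw [map_mul, c.2, mul_one]⟩
        left_inv := fun w => by simp
        right_inv := fun c => by simp }
    rw [Nat.card_congr e]
    exact fun h => hX (h.trans (Subgroup.card_subgroup_dvd_card _))
  let τ : Equiv.Perm T := Equiv.Perm.subtypePerm (MulAut.toPerm X σ) key
  have hτ : τ ^ p ^ 1 = 1 := by
    rw [pow_one, Equiv.Perm.subtypePerm_pow]
    ext w
    simp [← map_pow, hσ]
  obtain ⟨w, hw⟩ := Equiv.Perm.exists_fixed_point_of_prime hcard hτ
  have hw' : σ w.1 = w.1 := congrArg Subtype.val hw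
  have h1 : w.1 ∈ M := hfix _ hw'
  have h2 : w.1⁻¹ * z ∈ M := by
    apply hM
    rw [← Abelianization.ker_of, MonoidHom.mem_ker, map_mul, map_inv, w.2]; simp
  simpa using M.mul_mem h1 h2

lemma norm_mem {X : Type*} [Group X] [Finite X] (p : ℕ) (hp : p.Prime)
    (hX : ¬ p ∣ Nat.card X) (σ : MulAut X) (hσ : σ ^ p = 1) (M : Subgroup X)
    (hM : commutator X ≤ M) (hfix : ∀ z, σ z = z → z ∈ M) (z : X) :
    ∏ k ∈ Finset.range p, Abelianization.of ((σ ^ k) z) ∈ M.map Abelianization.of := by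
  have hsurj : Function.Surjective (Abelianization.of (G := X)) :=
    QuotientGroup.mk'_surjective (commutator X)
  obtain ⟨n, hn'⟩ := hsurj (∏ k ∈ Finset.range p, Abelianization.of ((σ ^ k) z))
  refine ⟨n, lift_fixed p hp hX σ hσ M hM hfix n ?_, hn'⟩
  rw [← map_of_aut, hn', map_prod]
  have h1 : ∀ k ∈ Finset.range p, Abelianization.map σ.toMonoidHom
      (Abelianization.of ((σ ^ k) z)) = Abelianization.of ((σ ^ (k+1)) z) := by
    intro k _
    rw [map_of_aut, pow_succ']; rfl
  rw [Finset.prod_congr rfl h1]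
  have h2 := Finset.prod_range_succ (fun k => Abelianization.of ((σ ^ k) z)) p
  rw [Finset.prod_range_succ'] at h2
  simpa [hσ] using h2

lemma ab_step {X : Type*} [Group X] [Finite X] (p : ℕ) (hp : p.Prime)
    (hX : ¬ p ∣ Nat.card X) (x y : MulAut X) (hc : Commute x y) (hx : x ^ p = 1) (hy : y ^ p = 1)
    (M : Subgroup X) (hM : commutator X ≤ M) (hfx : ∀ z, x z = z → z ∈ M)
    (hfxy : ∀ i : ℕ, ∀ z, (x ^ i * y) z = z → z ∈ M) : M = ⊤ := by
  rw [eq_top_iff]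
  intro z _
  set U := M.map (Abelianization.of (G := X)) with hU
  have e1 : ∀ i, ∏ j ∈ Finset.range p, Abelianization.of (((x ^ i * y) ^ j) z) ∈ U := by
    intro i
    refine norm_mem p hp hX _ ?_ M hM (hfxy i) z
    rw [(hc.pow_left i).mul_pow, ← pow_mul, mul_comm i p, pow_mul, hx, hy]; simp
  have e2 : ∏ i ∈ Finset.range p, ∏ j ∈ Finset.range p,
      Abelianization.of (((x ^ i * y) ^ j) z) ∈ U := Subgroup.prod_mem _ fun i _ => e1 i
  rw [Finset.prod_comm] at e2
  have e3 : ∀ j ∈ Finset.range p, j ≠ 0 → ∏ i ∈ Finset.range p,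
      Abelianization.of (((x ^ i * y) ^ j) z) ∈ U := by
    intro j hj hj0
    have hj' : ¬ p ∣ j := Nat.not_dvd_of_pos_of_lt (Nat.pos_of_ne_zero hj0) (Finset.mem_range.1 hj)
    have h := prod_periodic_mul p hp (fun k => Abelianization.of ((x ^ k) ((y ^ j) z)))
      (fun n => by
        have : x ^ (n % p) = x ^ n := by
          conv_rhs => rw [← Nat.mod_add_div n p, pow_add, pow_mul, hx]
          simp
        simp only [this]) j hj'
    have h2 : ∏ i ∈ Finset.range p, Abelianization.of (((x ^ i * y) ^ j) z) =
        ∏ i ∈ Finset.range p, Abelianization.of ((x ^ (i * j)) ((y ^ j) z)) := by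
      refine Finset.prod_congr rfl fun i _ => ?_
      rw [(hc.pow_left i).mul_pow, ← pow_mul]; rfl
    rw [h2, h]
    exact norm_mem p hp hX x hx M hM hfx _
  have h0 : 0 ∈ Finset.range p := Finset.mem_range.2 hp.pos
  rw [← Finset.mul_prod_erase _ _ h0] at e2
  have e4 : ∏ j ∈ (Finset.range p).erase 0, ∏ i ∈ Finset.range p,
      Abelianization.of (((x ^ i * y) ^ j) z) ∈ U := by
    refine Subgroup.prod_mem _ fun j hj => ?_
    exact e3 j (Finset.mem_of_mem_erase hj) (Finset.ne_of_mem_erase hj)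
  have e5 := (Subgroup.mul_mem_cancel_right U e4).1 e2
  have e6 : Abelianization.of (z ^ p) ∈ U := by simpa using e5
  obtain ⟨m, hm, hmz⟩ := e6
  have e7 : z ^ p ∈ M := by
    have h2 : m⁻¹ * z ^ p ∈ M := by
      apply hM
      rw [← Abelianization.ker_of, MonoidHom.mem_ker, map_mul, map_inv, hmz]; simp
    simpa using M.mul_mem hm h2
  have hcop : (orderOf z).Coprime p := by
    rw [Nat.coprime_comm, Nat.Prime.coprime_iff_not_dvd hp]
    exact fun h => hX (h.trans (orderOf_dvd_natCard z))
  obtain ⟨k, hk⟩ := exists_pow_eq_self_of_coprime hcop.symm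
  rw [← hk]
  exact M.pow_mem e7 k

lemma qgroup_le {G : Type*} [Group G] [Finite G] (p q : ℕ) (hp : p.Prime) (hq : q.Prime)
    (H : Subgroup G) (x y : G) (hc : Commute x y) (hx : x ^ p = 1) (hy : y ^ p = 1)
    (hfx : ∀ z, z * x = x * z → z ∈ H)
    (hfxy : ∀ i : ℕ, ∀ z, z * (x ^ i * y) = (x ^ i * y) * z → z ∈ H) :
    ∀ (n : ℕ) (X : Subgroup G), Nat.card X = n → IsPGroup q X → ¬ p ∣ Nat.card X →
      x ∈ Subgroup.normalizer (X : Set G) → y ∈ Subgroup.normalizer (X : Set G) → X ≤ H := by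
  intro n
  induction n using Nat.strong_induction_on with
  | _ n ih =>
  intro X hn hqX hpX hxX hyX
  have := Fact.mk hq
  rcases subsingleton_or_nontrivial X with hs | hs
  · intro z hz
    have : (⟨z, hz⟩ : X) = 1 := Subsingleton.elim _ _
    have : z = 1 := congrArg Subtype.val this
    rw [this]; exact H.one_mem
  have hnil := hqX.isNilpotent
  have hlt := Group.IsSolvable.commutator_lt_top_of_nontrivial X
  have hle : ⁅X, X⁆ ≤ X := by rw [← Subgroup.map_subtype_commutator]; exact Subgroup.map_subtype_le _
  have hcard : Nat.card ↥⁅X, X⁆ < n := by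
    rw [← hn]
    by_contra hcon
    have := Subgroup.eq_of_le_of_card_ge hle (not_lt.1 hcon)
    rw [← Subgroup.map_subtype_commutator] at this
    apply hlt.ne
    apply Subgroup.map_injective X.subtype_injective
    rw [this, ← MonoidHom.range_eq_map, Subgroup.range_subtype]
  have hnorm : ∀ g, g ∈ Subgroup.normalizer (X : Set G) →
      g ∈ Subgroup.normalizer ((⁅X, X⁆ : Subgroup G) : Set G) := by
    intro g hg
    have hg' : X.map (MulAut.conj g).toMonoidHom = X := by
      ext w
      rw [Subgroup.mem_normalizer_iff] at hg
      constructor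
      · rintro ⟨v, hv, rfl⟩
        exact (hg v).1 hv
      · intro hw
        refine ⟨g⁻¹ * w * g, (hg _).2 (by simpa [mul_assoc] using hw), by simp [mul_assoc]⟩
    have h2 : (⁅X, X⁆).map (MulAut.conj g).toMonoidHom = ⁅X, X⁆ := by
      rw [Subgroup.map_commutator, hg']
    rw [Subgroup.mem_normalizer_iff]
    intro w
    have h3 := Subgroup.mem_map_iff_mem (K := ⁅X, X⁆) (x := w) (f := (MulAut.conj g).toMonoidHom)
      (MulAut.conj g).injective
    rw [h2] at h3
    exact h3.symm
  have hcomm : ⁅X, X⁆ ≤ H := ih _ hcard ⁅X, X⁆ rfl (hqX.to_le hle)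
    (fun h => hpX (h.trans (Subgroup.card_dvd_of_le hle))) (hnorm x hxX) (hnorm y hyX)
  let κ := X.normalizerMonoidHom
  let x' : Subgroup.normalizer (X : Set G) := ⟨x, hxX⟩
  let y' : Subgroup.normalizer (X : Set G) := ⟨y, hyX⟩
  have hκ : ∀ b : Subgroup.normalizer (X : Set G), ∀ z : X, ((κ b) z = z) →
      (z : G) * b = b * z := by
    intro b z hz
    have h := congrArg Subtype.val hz
    have h' : (b : G) * z * (b : G)⁻¹ = z := h
    rw [mul_inv_eq_iff_eq_mul] at h'
    exact h'.symm
  have key : H.subgroupOf X = ⊤ := by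
    refine ab_step p hp hpX (κ x') (κ y') ?_ ?_ ?_ _ ?_ ?_ ?_
    · have : Commute x' y' := Subtype.ext hc
      exact this.map κ
    · rw [← map_pow, show x' ^ p = 1 from Subtype.ext hx, map_one]
    · rw [← map_pow, show y' ^ p = 1 from Subtype.ext hy, map_one]
    · intro z hz
      apply hcomm
      rw [← Subgroup.map_subtype_commutator]
      exact ⟨z, hz, rfl⟩
    · intro z hz
      exact hfx _ (hκ _ _ hz)
    · intro i z hz
      rw [← map_pow, ← map_mul] at hz
      exact hfxy i _ (hκ _ _ hz)
  exact Subgroup.subgroupOf_eq_top.1 key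

lemma exists_conj_le {G : Type*} [Group G] [Finite G] (p : ℕ) (hp : p.Prime) (A M : Subgroup G)
    (hA : IsPGroup p A) (hM : ¬ p ∣ M.index) : ∃ g : G, ∀ a ∈ A, g⁻¹ * a * g ∈ M := by
  have := Fact.mk hp
  obtain ⟨c, hc⟩ := hA.nonempty_fixed_point_of_prime_not_dvd_card (G ⧸ M) hM
  obtain ⟨g, rfl⟩ := QuotientGroup.mk_surjective c
  refine ⟨g, fun a ha => ?_⟩
  have h : ((a * g : G) : G ⧸ M) = (g : G ⧸ M) := hc ⟨a, ha⟩
  have h2 := QuotientGroup.eq.1 h.symm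
  rwa [← mul_assoc] at h2

lemma index_dvd_of_sup {G : Type*} [Group G] [Finite G] (M N : Subgroup G) [N.Normal]
    (h : M ⊔ N = ⊤) : M.index ∣ Nat.card N := by
  have h1 : N.index = N.relIndex M := by
    rw [← Subgroup.relIndex_top_right, ← h, Subgroup.relIndex_sup_right]
  obtain ⟨c, hc⟩ : N.index ∣ Nat.card M := h1 ▸ Subgroup.relIndex_dvd_card N M
  have h2 := N.card_mul_index
  have h3 := M.card_mul_index
  refine ⟨c, ?_⟩
  have h4 : 0 < N.index := Nat.pos_of_ne_zero Subgroup.index_ne_zero_of_finite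
  apply Nat.eq_of_mul_eq_mul_right h4
  rw [h2, ← h3, hc]; ring

lemma card_sup_dvd {G : Type*} [Group G] [Finite G] (M N : Subgroup G) [N.Normal] :
    Nat.card ↥(M ⊔ N) ∣ Nat.card M * Nat.card N := by
  have h1 := Subgroup.relIndex_sup_right (H := M) (K := N)
  have h2 : Nat.card N * N.relIndex (M ⊔ N) = Nat.card ↥(M ⊔ N) := by
    have := (N.subgroupOf (M ⊔ N)).card_mul_index
    rwa [Nat.card_congr (Subgroup.subgroupOfEquivOfLe (le_sup_right : N ≤ M ⊔ N)).toEquiv] at this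
  rw [← h2, h1, mul_comm]
  exact Nat.mul_dvd_mul_right (Subgroup.relIndex_dvd_card N M) _

lemma pprime_le {G : Type*} [Group G] [Finite G] (p : ℕ) (hp : p.Prime)
    (H : Subgroup G) (A : Subgroup G) (hA : Nat.card A = p ^ 2) (hAp : ∀ a ∈ A, a ^ p = 1)
    (hfix : ∀ a ∈ A, a ≠ 1 → ∀ z, z * a = a * z → z ∈ H)
    (N : Subgroup G) [hN : N.Normal] (hpN : ¬ p ∣ Nat.card N) : N ≤ H := by
  have := Fact.mk hp
  have hcomm := IsPGroup.isMulCommutative_of_card_eq_prime_sq hA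
  have hne : Nontrivial A := by
    rw [← Finite.one_lt_card_iff_nontrivial, hA]
    exact Nat.one_lt_pow (by norm_num) hp.one_lt
  obtain ⟨x, hx1⟩ := exists_ne (1 : A)
  have hxp : (x : G) ^ p = 1 := hAp _ x.2
  have hxp' : x ^ p = 1 := Subtype.ext hxp
  have hox : orderOf x = p := orderOf_eq_prime hxp' hx1
  obtain ⟨y, hy⟩ : ∃ y : A, y ∉ Subgroup.zpowers x := by
    by_contra hcon
    push Not at hcon
    have h1 : Subgroup.zpowers x = ⊤ := eq_top_iff.2 fun y _ => hcon y
    have h2 := Nat.card_zpowers x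
    rw [h1, Subgroup.card_top, hA, hox] at h2
    have := hp.one_lt
    nlinarith
  have hyp : (y : G) ^ p = 1 := hAp _ y.2
  have hc : Commute (x : G) (y : G) := by
    have : x * y = y * x := hcomm.is_comm.comm x y
    exact congrArg Subtype.val this
  have hxy : ∀ i : ℕ, ((x : G) ^ i * y) ≠ 1 := by
    intro i hi
    apply hy
    have h1 : x ^ i * y = 1 := Subtype.ext hi
    rw [eq_inv_of_mul_eq_one_right h1]
    exact Subgroup.inv_mem _ (Subgroup.pow_mem _ (Subgroup.mem_zpowers x) i)
  have hfx : ∀ z, z * (x : G) = x * z → z ∈ H :=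
    hfix x x.2 (fun h => hx1 (Subtype.ext h))
  have hfxy : ∀ i : ℕ, ∀ z, z * ((x : G) ^ i * y) = ((x : G) ^ i * y) * z → z ∈ H :=
    fun i => hfix _ (A.mul_mem (A.pow_mem x.2 i) y.2) (hxy i)
  have hApg : IsPGroup p A := IsPGroup.of_card hA
  -- every Sylow order divides
  have hdvd : Nat.card N ∣ Nat.card ↥(H ⊓ N) := by
    rw [Nat.dvd_iff_prime_pow_dvd_dvd]
    intro q k hq hk
    have := Fact.mk hq
    obtain ⟨P⟩ : Nonempty (Sylow q N) := inferInstance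
    have hF := Sylow.normalizer_sup_eq_top P
    set Q : Subgroup G := P.map N.subtype with hQ
    have hQN : Q ≤ N := Subgroup.map_subtype_le _
    have hidx : ¬ p ∣ (Subgroup.normalizer (Q : Set G)).index := fun h =>
      hpN (h.trans (index_dvd_of_sup _ N hF))
    obtain ⟨g, hg⟩ := exists_conj_le p hp A _ hApg hidx
    let R : Subgroup G := Q.map (MulAut.conj g).toMonoidHom
    have hRQ : Nat.card R = Nat.card Q :=
      (Nat.card_congr (Q.equivMapOfInjective _ (MulAut.conj g).injective).toEquiv).symm
    have hQP : Nat.card Q = Nat.card P :=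
      (Nat.card_congr ((P : Subgroup N).equivMapOfInjective _ N.subtype_injective).toEquiv).symm
    have hRN : R ≤ N := by
      rintro _ ⟨w, hw, rfl⟩
      exact hN.conj_mem _ (hQN hw) g
    have hRq : IsPGroup q R := (P.2.map N.subtype).map _
    have hnorm : ∀ a ∈ A, a ∈ Subgroup.normalizer (R : Set G) := by
      intro a ha
      have h1 := hg a ha
      rw [Subgroup.mem_normalizer_iff] at h1 ⊢
      have hm : ∀ w, w ∈ R ↔ g⁻¹ * w * g ∈ Q := by
        intro w
        constructor
        · rintro ⟨v, hv, rfl⟩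
          simpa [mul_assoc] using hv
        · intro h
          exact ⟨_, h, by simp [mul_assoc]⟩
      intro w
      rw [hm, hm, h1]
      simp [mul_assoc]
    have hRp : ¬ p ∣ Nat.card R := fun h => hpN (h.trans (Subgroup.card_dvd_of_le hRN))
    have hRH : R ≤ H := qgroup_le p q hp hq H x y hc hxp hyp hfx hfxy _ R rfl hRq hRp
      (hnorm _ x.2) (hnorm _ y.2)
    have h3 : Nat.card R ∣ Nat.card ↥(H ⊓ N) := Subgroup.card_dvd_of_le (le_inf hRH hRN)
    refine dvd_trans ?_ h3
    rw [hRQ, hQP, Sylow.card_eq_multiplicity]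
    apply pow_dvd_pow
    exact (hq.pow_dvd_iff_le_factorization Nat.card_pos.ne').1 hk
  have h5 : H ⊓ N = N := Subgroup.eq_of_le_of_card_ge inf_le_right
    (Nat.le_of_dvd Nat.card_pos hdvd)
  exact inf_eq_right.1 h5

/-- element version of strong embedding -/
def SEmb {G : Type*} [Group G] (p : ℕ) (H : Subgroup G) : Prop :=
  (∃ x ∈ H, orderOf x = p) ∧ ∀ x ∈ H, orderOf x = p → ∀ g, g * x * g⁻¹ ∈ H → g ∈ H

lemma SEmb.index {G : Type*} [Group G] [Finite G] {p : ℕ} (hp : p.Prime) {H : Subgroup G}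
    (h : SEmb p H) : ¬ p ∣ H.index := by
  have := Fact.mk hp
  obtain ⟨⟨x, hx, hox⟩, h2⟩ := h
  have hP : IsPGroup p (Subgroup.zpowers x) :=
    IsPGroup.of_card (n := 1) (by rw [Nat.card_zpowers, hox, pow_one])
  intro hd
  have hfix : ((1 : G) : G ⧸ H) ∈ MulAction.fixedPoints (Subgroup.zpowers x) (G ⧸ H) := by
    rintro ⟨a, ha⟩
    have haH : a ∈ H := (Subgroup.zpowers_le.2 hx) ha
    change ((a * 1 : G) : G ⧸ H) = ((1 : G) : G ⧸ H)
    rw [mul_one, QuotientGroup.eq]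
    simpa using haH
  obtain ⟨c, hc, hne⟩ := hP.exists_fixed_point_of_prime_dvd_card_of_fixed_point (G ⧸ H) hd hfix
  obtain ⟨g, rfl⟩ := QuotientGroup.mk_surjective c
  have h3 : ((x * g : G) : G ⧸ H) = (g : G ⧸ H) := hc ⟨x, Subgroup.mem_zpowers x⟩
  have h4 := QuotientGroup.eq.1 h3.symm
  have h5 := h2 x hx hox g⁻¹ (by simpa [mul_assoc] using h4)
  apply hne
  rw [QuotientGroup.eq]
  simpa using H.inv_mem h5

lemma SEmb.exists_mem {G : Type*} [Group G] [Finite G] {p : ℕ} (hp : p.Prime) {H : Subgroup G}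
    (h : SEmb p H) (N : Subgroup G) [hN : N.Normal] (hpN : p ∣ Nat.card N) :
    ∃ x ∈ N, x ∈ H ∧ orderOf x = p := by
  have := Fact.mk hp
  obtain ⟨⟨y, hyN⟩, hoy⟩ := exists_prime_orderOf_dvd_card' p hpN
  have hoy' : orderOf y = p := by rw [← hoy, Subgroup.orderOf_mk]
  have hP : IsPGroup p (Subgroup.zpowers y) :=
    IsPGroup.of_card (n := 1) (by rw [Nat.card_zpowers, hoy', pow_one])
  obtain ⟨g, hg⟩ := exists_conj_le p hp _ H hP (h.index hp)
  refine ⟨g⁻¹ * y * g, ?_, hg y (Subgroup.mem_zpowers y), ?_⟩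
  · simpa using hN.conj_mem y hyN g⁻¹
  · have := orderOf_injective (MulAut.conj g⁻¹).toMonoidHom (MulAut.conj g⁻¹).injective y
    rw [← hoy', ← this]; simp

lemma SEmb.subgroupOf {G : Type*} [Group G] [Finite G] {p : ℕ} (hp : p.Prime) {H : Subgroup G}
    (h : SEmb p H) (N : Subgroup G) [hN : N.Normal] (hpN : p ∣ Nat.card N) :
    SEmb p (H.subgroupOf N) := by
  obtain ⟨x, hxN, hxH, hox⟩ := h.exists_mem hp N hpN
  refine ⟨⟨⟨x, hxN⟩, hxH, by rw [Subgroup.orderOf_mk, hox]⟩, ?_⟩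
  rintro ⟨z, hz⟩ hzH hoz ⟨g, hg⟩ hgz
  rw [Subgroup.orderOf_mk] at hoz
  exact h.2 z hzH hoz g hgz

lemma SEmb.cent {G : Type*} [Group G] {p : ℕ} {H : Subgroup G} (h : SEmb p H) {x : G}
    (hx : x ∈ H) (ho : orderOf x = p) {g : G} (hg : g * x = x * g) : g ∈ H := by
  apply h.2 x hx ho
  rw [hg]; simpa using hx

lemma SEmb.eq_top {G : Type*} [Group G] [Finite G] {p : ℕ} (hp : p.Prime) {H : Subgroup G}
    (h : SEmb p H) (N : Subgroup G) [hN : N.Normal] (hpN : p ∣ Nat.card N) (hNH : N ≤ H) :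
    H = ⊤ := by
  obtain ⟨x, hxN, hxH, hox⟩ := h.exists_mem hp N hpN
  exact eq_top_iff.2 fun g _ => h.2 x hxH hox g (hNH (hN.conj_mem x hxN g))

lemma map_normal_aut {N : Type*} [Group N] (L : Subgroup N) [hL : L.Normal] (σ : MulAut N) :
    (L.map σ.toMonoidHom).Normal := hL.map _ σ.surjective

lemma card_map_aut {N : Type*} [Group N] (L : Subgroup N) (σ : MulAut N) :
    Nat.card (L.map σ.toMonoidHom) = Nat.card L :=
  (Nat.card_congr (L.equivMapOfInjective σ.toMonoidHom σ.injective).toEquiv).symm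

lemma simple_of {N : Type*} [Group N] [Finite N] {p : ℕ} (hp : p.Prime) (H : Subgroup N)
    (hH : SEmb p H) (hHt : H ≠ ⊤) (S : Subgroup (MulAut N))
    (hchar : ∀ K : Subgroup N, (∀ σ ∈ S, K.map σ.toMonoidHom ≤ K) → K = ⊥ ∨ K = ⊤)
    (L : Subgroup N) [hL : L.Normal] : L = ⊥ ∨ L = ⊤ := by
  have hpN : p ∣ Nat.card N := by
    obtain ⟨⟨x, _, hx⟩, _⟩ := hH
    rw [← hx]; exact orderOf_dvd_natCard x
  -- all nontrivial normal subgroups have order divisible by p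
  have hdiv : ∀ L : Subgroup N, L.Normal → L ≠ ⊥ → p ∣ Nat.card L := by
    intro L hL hLb
    by_contra hpL
    obtain ⟨O, ⟨hO1, hO2⟩, hOmax⟩ : ∃ O : Subgroup N, (O.Normal ∧ ¬ p ∣ Nat.card O) ∧
        ∀ O' : Subgroup N, (O'.Normal ∧ ¬ p ∣ Nat.card O') → Nat.card O' ≤ Nat.card O := by
      obtain ⟨O, hO, hmax⟩ := Set.exists_max_image
        {O : Subgroup N | O.Normal ∧ ¬ p ∣ Nat.card O} (fun O => Nat.card O) (Set.toFinite _)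
        ⟨L, hL, hpL⟩
      exact ⟨O, hO, hmax⟩
    have hOle : ∀ M : Subgroup N, M.Normal → ¬ p ∣ Nat.card M → M ≤ O := by
      intro M hM hpM
      have h1 : (O ⊔ M).Normal := Subgroup.sup_normal O M
      have h2 : ¬ p ∣ Nat.card ↥(O ⊔ M) := by
        intro h
        rcases hp.dvd_mul.1 (h.trans (card_sup_dvd O M)) with h | h
        · exact hO2 h
        · exact hpM h
      have h3 := Subgroup.eq_of_le_of_card_ge (le_sup_left : O ≤ O ⊔ M) (hOmax _ ⟨h1, h2⟩)
      rw [h3]; exact le_sup_right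
    rcases hchar O (fun σ _ => hOle _ (map_normal_aut O σ) (by rwa [card_map_aut])) with h | h
    · exact hLb (le_bot_iff.1 (h ▸ hOle L hL hpL))
    · rw [h, Subgroup.card_top] at hO2; exact hO2 hpN
  by_contra hcon
  push Not at hcon
  obtain ⟨hLb, hLt⟩ := hcon
  obtain ⟨M, hML, ⟨hMn, hMb⟩, hMmin⟩ := exists_minimal_le_of_wellFoundedLT
    (fun K : Subgroup N => K.Normal ∧ K ≠ ⊥) L ⟨hL, hLb⟩
  have hdisj : ∀ σ : MulAut N, M.map σ.toMonoidHom ≤ M ∨ Disjoint M (M.map σ.toMonoidHom) := by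
    intro σ
    have := map_normal_aut M σ
    by_cases h : M ⊓ M.map σ.toMonoidHom = ⊥
    · right; exact disjoint_iff.2 h
    · left
      have h1 : M ≤ M ⊓ M.map σ.toMonoidHom := hMmin ⟨Subgroup.normal_inf_normal _ _, h⟩ inf_le_left
      have h2 := Subgroup.eq_of_le_of_card_ge (h1.trans inf_le_right) (card_map_aut M σ).le
      exact h2.ge
  have hD : ∀ σ : MulAut N, Disjoint M (M.map σ.toMonoidHom) →
      M.map σ.toMonoidHom ≤ Subgroup.centralizer (M : Set N) := by
    intro σ hσ w hw
    rw [Subgroup.mem_centralizer_iff]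
    intro m hm
    exact Subgroup.commute_of_normal_of_disjoint M _ hMn (map_normal_aut M σ) hσ m w hm hw
  have hMt : M ≠ ⊤ := fun h => hLt (top_le_iff.1 (h ▸ hML))
  obtain ⟨σ, hσS, hσ⟩ : ∃ σ ∈ S, ¬ M.map σ.toMonoidHom ≤ M := by
    by_contra hcon
    push Not at hcon
    rcases hchar M hcon with h | h
    · exact hMb h
    · exact hMt h
  have hσd := (hdisj σ).resolve_left hσ
  have hDb : Subgroup.centralizer (M : Set N) ≠ ⊥ := by
    intro h
    have := hD σ hσd
    rw [h, le_bot_iff] at this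
    exact hσ (this ▸ bot_le)
  have hDn : (Subgroup.centralizer (M : Set N)).Normal := Subgroup.normal_centralizer
  obtain ⟨x, hxM, hxH, hox⟩ := hH.exists_mem hp M (hdiv M hMn hMb)
  obtain ⟨y, hyD, hyH, hoy⟩ := hH.exists_mem hp _ (hdiv _ hDn hDb)
  have hDH : Subgroup.centralizer (M : Set N) ≤ H := fun w hw =>
    hH.cent hxH hox (Subgroup.mem_centralizer_iff.1 hw x hxM).symm
  have hMH : M ≤ H := fun w hw =>
    hH.cent hyH hoy (Subgroup.mem_centralizer_iff.1 hyD w hw)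
  have hall : ∀ τ : MulAut N, M.map τ.toMonoidHom ≤ H := by
    intro τ
    rcases hdisj τ with h | h
    · exact h.trans hMH
    · exact (hD τ h).trans hDH
  let K : Subgroup N := ⨆ τ : S, M.map (τ : MulAut N).toMonoidHom
  have hKH : K ≤ H := iSup_le fun τ => hall τ
  have hMK : M ≤ K := by
    refine le_trans ?_ (le_iSup (fun τ : S => M.map (τ : MulAut N).toMonoidHom) 1)
    intro m hm
    exact ⟨m, hm, rfl⟩
  rcases hchar K (by
    intro τ hτ
    rw [Subgroup.map_iSup]
    refine iSup_le fun ρ => ?_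
    refine le_trans ?_ (le_iSup (fun τ : S => M.map (τ : MulAut N).toMonoidHom) (⟨τ, hτ⟩ * ρ))
    rw [Subgroup.map_map]
    rfl) with h | h
  · exact hMb (le_bot_iff.1 (h ▸ hMK))
  · exact hHt (top_le_iff.1 (h ▸ hKH))

lemma exists_simple {G : Type*} [Group G] [Finite G] {p : ℕ} (hp : p.Prime) (H : Subgroup G)
    (hH : SEmb p H) (hHt : H ≠ ⊤) (hdiv : ∀ N : Subgroup G, N.Normal → N ≠ ⊥ → p ∣ Nat.card N) :
    ∃ N : Subgroup G, N.Normal ∧ IsSimpleGroup N ∧ (∃ a b : N, a * b ≠ b * a) ∧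
      Subgroup.centralizer (N : Set G) = ⊥ := by
  have htop : (⊤ : Subgroup G) ≠ ⊥ := fun h => hHt (by
    have : H ≤ ⊤ := le_top
    rw [h] at this ⊢
    exact le_bot_iff.1 this)
  obtain ⟨N, -, ⟨hNn, hNb⟩, hNmin⟩ := exists_minimal_le_of_wellFoundedLT
    (fun K : Subgroup G => K.Normal ∧ K ≠ ⊥) ⊤ ⟨inferInstance, htop⟩
  have hpN := hdiv N hNn hNb
  have hNH : ¬ N ≤ H := fun h => hHt (hH.eq_top hp N hpN h)
  obtain ⟨x, hxN, hxH, hox⟩ := hH.exists_mem hp N hpN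
  refine ⟨N, hNn, ?_, ?_, ?_⟩
  · have hnt : Nontrivial N := (Subgroup.nontrivial_iff_ne_bot N).2 hNb
    refine { eq_bot_or_eq_top_of_normal := fun L hL => ?_ }
    refine simple_of hp (H.subgroupOf N) (hH.subgroupOf hp N hpN)
      (fun h => hNH (Subgroup.subgroupOf_eq_top.1 h))
      (MulAut.conjNormal (G := G) (H := N)).range ?_ L
    intro K hK
    have hKn : (K.map N.subtype).Normal := by
      refine ⟨?_⟩
      rintro _ ⟨k, hk, rfl⟩ g
      refine ⟨MulAut.conjNormal g k, hK _ ⟨g, rfl⟩ ⟨k, hk, rfl⟩, ?_⟩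
      simp
    by_cases hKb : K = ⊥
    · left; exact hKb
    · right
      have h1 : N ≤ K.map N.subtype := hNmin ⟨hKn, fun h => hKb (by
        rwa [Subgroup.map_eq_bot_iff_of_injective _ N.subtype_injective] at h)⟩
        (Subgroup.map_subtype_le _)
      rw [eq_top_iff]
      rintro ⟨n, hn⟩ _
      obtain ⟨k, hk, hkn⟩ := h1 hn
      have : k = ⟨n, hn⟩ := Subtype.ext hkn
      exact this ▸ hk
  · by_contra hcon
    push Not at hcon
    apply hNH
    intro n hn
    exact hH.cent hxH hox (congrArg Subtype.val (hcon ⟨n, hn⟩ ⟨x, hxN⟩))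
  · by_contra hcon
    have hCn : (Subgroup.centralizer (N : Set G)).Normal := Subgroup.normal_centralizer
    obtain ⟨y, hyC, hyH, hoy⟩ := hH.exists_mem hp _ (hdiv _ hCn hcon)
    exact hNH fun n hn => hH.cent hyH hoy (Subgroup.mem_centralizer_iff.1 hyC n hn)

lemma subnormal_cases {G : Type*} [Group G] (N : Subgroup G) [hN : N.Normal]
    [hs : IsSimpleGroup N] (hC : Subgroup.centralizer (N : Set G) = ⊥) (K : Subgroup G)
    (hK : IsSubnormal K) : K = ⊥ ∨ N ≤ K := by
  unfold IsSubnormal at hK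
  induction hK using Relation.ReflTransGen.head_induction_on with
  | refl => right; exact le_top
  | @head A B h _ ih =>
    obtain ⟨hAB, hconj⟩ := h
    rcases ih with ih | ih
    · left; exact le_bot_iff.1 (ih ▸ hAB)
    · have hn : (A.subgroupOf N).Normal := by
        refine ⟨?_⟩
        rintro ⟨a, ha⟩ haA ⟨n, hn⟩
        exact hconj n (ih hn) a haA
      rcases hn.eq_bot_or_eq_top with h | h
      · left
        rw [← le_bot_iff, ← hC]
        intro a ha
        rw [Subgroup.mem_centralizer_iff]
        intro n hn
        have h1 : n * a * n⁻¹ * a⁻¹ ∈ A := A.mul_mem (hconj n (ih hn) a ha) (A.inv_mem ha)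
        have h2 : n * a * n⁻¹ * a⁻¹ ∈ N := by
          have := N.mul_mem hn (hN.conj_mem _ (N.inv_mem hn) a)
          simpa [mul_assoc] using this
        have h3 : (⟨_, h2⟩ : N) ∈ A.subgroupOf N := h1
        rw [h, Subgroup.mem_bot] at h3
        have h4 : n * a * n⁻¹ * a⁻¹ = 1 := congrArg Subtype.val h3
        rw [mul_inv_eq_one, mul_inv_eq_iff_eq_mul] at h4
        exact h4
      · right; exact Subgroup.subgroupOf_eq_top.1 h

open scoped commutatorElement

lemma component_le {G : Type*} [Group G] (N : Subgroup G) [hN : N.Normal]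
    (hab : ∃ a b : N, a * b ≠ b * a) (K : Subgroup G) (hNK : N ≤ K) (hK : IsQuasisimple K) :
    K ≤ N := by
  obtain ⟨hperf, hsimp⟩ := hK
  have hn : (N.subgroupOf K).Normal := Subgroup.normal_subgroupOf
  have hm : ((N.subgroupOf K).map (QuotientGroup.mk' (Subgroup.center K))).Normal :=
    hn.map _ (QuotientGroup.mk'_surjective _)
  rcases hm.eq_bot_or_eq_top with h | h
  · exfalso
    obtain ⟨a, b, hne⟩ := hab
    apply hne
    rw [Subgroup.map_eq_bot_iff, QuotientGroup.ker_mk'] at h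
    have h1 : (⟨a, hNK a.2⟩ : K) ∈ Subgroup.center K := h a.2
    have h2 := Subgroup.mem_center_iff.1 h1 ⟨b, hNK b.2⟩
    have h3 : (b : G) * a = a * b := congrArg Subtype.val h2
    exact Subtype.ext h3.symm
  · have h1 : ∀ k : K, ∃ n ∈ N.subgroupOf K, ∃ z ∈ Subgroup.center K, k = n * z := by
      intro k
      have : (QuotientGroup.mk' (Subgroup.center K)) k ∈
          ((N.subgroupOf K).map (QuotientGroup.mk' (Subgroup.center K))) := h ▸ Subgroup.mem_top _
      obtain ⟨n, hn, hnk⟩ := this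
      exact ⟨n, hn, n⁻¹ * k, QuotientGroup.eq.1 hnk, by simp⟩
    have h2 : commutator K ≤ N.subgroupOf K := by
      rw [commutator_def, Subgroup.commutator_le]
      intro a _ b _
      obtain ⟨n, hn', z, hz, rfl⟩ := h1 a
      obtain ⟨m, hm', w, hw, rfl⟩ := h1 b
      have e : ⁅n * z, m * w⁆ = ⁅n, m⁆ := by
        rw [Subgroup.mem_center_iff] at hz hw
        rw [commutatorElement_def, commutatorElement_def]
        have hz1 : z * (m * w) = (m * w) * z := (hz _).symm
        calc n * z * (m * w) * (n * z)⁻¹ * (m * w)⁻¹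
            = n * (z * (m * w)) * z⁻¹ * n⁻¹ * w⁻¹ * m⁻¹ := by group
          _ = n * m * (w * n⁻¹) * w⁻¹ * m⁻¹ := by rw [hz1]; group
          _ = n * m * n⁻¹ * m⁻¹ := by rw [← hw]; group
      rw [e, commutatorElement_def]
      exact mul_mem (mul_mem (mul_mem hn' hm') (inv_mem hn')) (inv_mem hm')
    rw [hperf, top_le_iff] at h2
    exact Subgroup.subgroupOf_eq_top.1 h2

lemma not_nilpotent {N : Type*} [Group N] [IsSimpleGroup N] (hab : ∃ a b : N, a * b ≠ b * a) :
    ¬ Group.IsNilpotent N := by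
  intro h
  have hs : Group.IsSolvable N := inferInstance
  obtain ⟨a, b, hne⟩ := hab
  exact hne (IsSimpleGroup.comm_iff_isSolvable.2 hs a b)

lemma genFitting_eq {G : Type*} [Group G] (N : Subgroup G) (hN : N.Normal)
    (hs : IsSimpleGroup N) (hab : ∃ a b : N, a * b ≠ b * a)
    (hC : Subgroup.centralizer (N : Set G) = ⊥) : genFitting G = N := by
  apply le_antisymm
  · refine sup_le (sSup_le ?_) (sSup_le ?_)
    · rintro M ⟨hM, hnil⟩
      rcases subnormal_cases N hC M (Relation.ReflTransGen.single
        ⟨le_top, fun b _ a ha => hM.conj_mem a ha b⟩) with h | h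
      · rw [h]; exact bot_le
      · exfalso
        have : Group.IsNilpotent N :=
          (Group.isNilpotent_congr (Subgroup.subgroupOfEquivOfLe h)).1 inferInstance
        exact not_nilpotent hab this
    · rintro K ⟨hK, hq⟩
      rcases subnormal_cases N hC K hK with h | h
      · rw [h]; exact bot_le
      · exact component_le N hab K h hq
  · refine le_trans ?_ le_sup_right
    apply le_sSup
    refine ⟨Relation.ReflTransGen.single ⟨le_top, fun b _ a ha => hN.conj_mem a ha b⟩, ?_, ?_⟩
    · rcases (inferInstance : (commutator N).Normal).eq_bot_or_eq_top with h | h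
      · exfalso
        obtain ⟨a, b, hne⟩ := hab
        have h1 : ⁅a, b⁆ ∈ commutator N :=
          Subgroup.commutator_mem_commutator (Subgroup.mem_top a) (Subgroup.mem_top b)
        rw [h, Subgroup.mem_bot, commutatorElement_eq_one_iff_mul_comm] at h1
        exact hne h1
      · exact h
    · rcases (inferInstance : (Subgroup.center N).Normal).eq_bot_or_eq_top with h | h
      · have hinj : Function.Injective (QuotientGroup.mk' (Subgroup.center N)) := by
          rw [← MonoidHom.ker_eq_bot_iff, QuotientGroup.ker_mk', h]
        have := hinj.nontrivial
        exact IsSimpleGroup.isSimpleGroup_of_surjective _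
          (QuotientGroup.mk'_surjective (Subgroup.center N))
      · exfalso
        obtain ⟨a, b, hne⟩ := hab
        have h1 : b ∈ Subgroup.center N := h ▸ Subgroup.mem_top b
        exact hne (Subgroup.mem_center_iff.1 h1 a)

theorem genFitting_simple_of_rank_two {G : Type*} [Group G] [Finite G]
    (p : ℕ) (hp : p.Prime) (H : Subgroup G) (hH : IsStronglyPEmbedded p H)
    (hrank : HasElemAbelianRankTwo p H) (hcore : pPrimeCore p ↥H = ⊥) :
    IsSimpleGroup ↥(genFitting G) ∧ ∃ a b : ↥(genFitting G), a * b ≠ b * a := by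
  have := Fact.mk hp
  obtain ⟨hHt, hpH, hstr⟩ := hH
  obtain ⟨A, hAH, hA, hAp⟩ := hrank
  have hS : SEmb p H := by
    constructor
    · obtain ⟨⟨y, hyN⟩, hoy⟩ := exists_prime_orderOf_dvd_card' p hpH
      exact ⟨y, hyN, by rw [← hoy, Subgroup.orderOf_mk]⟩
    · intro x hx hox g hg
      by_contra hgH
      apply hstr g hgH
      have h1 : g * x * g⁻¹ ∈ H ⊓ conjSub g H := ⟨hg, ⟨x, hx, rfl⟩⟩
      have h2 : orderOf (g * x * g⁻¹) = p := by
        have := orderOf_injective (MulAut.conj g).toMonoidHom (MulAut.conj g).injective x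
        rw [← hox, ← this]; simp
      rw [← h2, ← Subgroup.orderOf_mk _ h1]
      exact orderOf_dvd_natCard _
  have hdiv : ∀ N : Subgroup G, N.Normal → N ≠ ⊥ → p ∣ Nat.card N := by
    intro N hN hNb
    by_contra hpN
    have hNH : N ≤ H := pprime_le p hp H A hA hAp (fun a ha ha1 z hz =>
      hS.cent (hAH ha) (orderOf_eq_prime (hAp a ha) ha1) hz) N hpN
    have h1 : N.subgroupOf H ≤ pPrimeCore p H := by
      apply le_sSup
      refine ⟨Subgroup.normal_subgroupOf, ?_⟩
      rwa [Nat.card_congr (Subgroup.subgroupOfEquivOfLe hNH).toEquiv]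
    rw [hcore, le_bot_iff, Subgroup.subgroupOf_eq_bot] at h1
    exact hNb (h1.eq_bot_of_le hNH)
  obtain ⟨N, hNn, hNs, hab, hC⟩ := exists_simple hp H hS hHt hdiv
  rw [genFitting_eq N hNn hNs hab hC]
  exact ⟨hNs, hab⟩
end

section
/- Let $k \ge 2$, $A = \mathbb{Z}_{2^k} \times \mathbb{Z}_{2^k}$, and $G = \mathrm{Aut}(A) \cong \mathrm{GL}_2(\mathbb{Z}/2^k\mathbb{Z})$. If $H \le G$ with $H \cong \mathrm{Alt}(4)$, then $O_2(H)$ is the specific subgroup generated by the matrices $\begin{pmatrix} 1+2^{k-1} & 0 \\ 2^{k-1} & 1+2^{k-1} \end{pmatrix}$ and $\begin{pmatrix} 1 & 2^{k-1} \\ 2^{k-1} & 1 \end{pmatrix}$. In particular, $G$ contains exactly one conjugacy class of subgroups isomorphic to $\mathrm{Alt}(4)$. -/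
/-- `O_2(H)`, the largest normal 2-subgroup of `H`. -/
def twoCore (H : Type*) [Group H] : Subgroup H :=
  sSup {N : Subgroup H | N.Normal ∧ IsPGroup 2 ↥N}

/-- Group-theoretic facts on `Alt(4)`. -/
theorem a4_facts : ∃ τ : alternatingGroup (Fin 4), τ ^ 3 = 1 ∧ τ ≠ 1 ∧
    (∀ x : alternatingGroup (Fin 4), ∃ w : alternatingGroup (Fin 4), ∃ i : Fin 3,
      w ^ 2 = 1 ∧ x = w * τ ^ (i : ℕ)) ∧
    (∀ w : alternatingGroup (Fin 4), w ^ 2 = 1 →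
      w * (τ * w * τ ^ 2) * (τ ^ 2 * w * τ) = 1 ∧
      w * (τ * w * τ ^ 2) = (τ * w * τ ^ 2) * w) := by
  decide +kernel

theorem a4_mul : ∀ x y : alternatingGroup (Fin 4), x ^ 2 = 1 → y ^ 2 = 1 → (x * y) ^ 2 = 1 := by
  decide +kernel

theorem a4_ord : ∀ x : alternatingGroup (Fin 4), x ^ 2 = 1 ∨ x ^ 3 = 1 := by
  decide +kernel

theorem a4_count : Fintype.card {x : alternatingGroup (Fin 4) // x ^ 2 = 1} = 4 := by
  decide +kernel

theorem mem_twoCore {K : Type*} [Group K] (φ : K ≃* alternatingGroup (Fin 4)) (x : K) :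
    x ∈ twoCore K ↔ x ^ 2 = 1 := by
  have key : ∀ y : K, y ^ 2 = 1 ↔ (φ y) ^ 2 = 1 := fun y => by
    rw [← map_pow, map_eq_one_iff φ φ.injective]
  let W : Subgroup K :=
    { carrier := {y | y ^ 2 = 1}
      mul_mem' := by
        intro a b ha hb
        have ha' := (key a).1 ha
        have hb' := (key b).1 hb
        refine (key _).2 ?_
        rw [map_mul]
        exact a4_mul _ _ ha' hb'
      one_mem' := by simp
      inv_mem' := by
        intro a ha
        have : a ^ 2 = 1 := ha
        simp [this] }
  have hW : ∀ y, y ∈ W ↔ y ^ 2 = 1 := fun y => Iff.rfl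
  suffices h : twoCore K = W by rw [h, hW]
  apply le_antisymm
  · refine sSup_le ?_
    rintro N ⟨-, hN⟩ y hy
    obtain ⟨n, hn⟩ := hN ⟨y, hy⟩
    have hn' : y ^ (2 ^ n) = 1 := by
      have := congrArg Subtype.val hn
      simpa using this
    rw [hW, key]
    rcases a4_ord (φ y) with h | h
    · exact h
    · have h2 : (φ y) ^ (2 ^ n) = 1 := by rw [← map_pow, hn', map_one]
      have hc : Nat.Coprime 3 (2 ^ n) := Nat.Coprime.pow_right _ (by norm_num)
      have : φ y = 1 := by
        have h3 := Nat.dvd_gcd (orderOf_dvd_of_pow_eq_one h) (orderOf_dvd_of_pow_eq_one h2)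
        rw [hc] at h3
        exact orderOf_eq_one_iff.1 (Nat.dvd_one.1 h3)
      simp [this]
  · refine le_sSup ⟨⟨?_⟩, ?_⟩
    · intro n hn g
      rw [hW] at hn ⊢
      rw [conj_pow, hn]; simp
    · rintro ⟨y, hy⟩
      exact ⟨1, Subtype.ext (by simpa using (hW y).1 hy)⟩

section arith

variable {k : ℕ}

theorem two_pow_zero : (2 : ZMod (2 ^ k)) ^ k = 0 := by
  have := ZMod.natCast_self (2 ^ k)
  push_cast at this
  exact this

theorem div_lem {j : ℕ} (hj : j ≤ k) (x : ZMod (2 ^ k)) (h : 2 ^ j * x = 0) :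
    ∃ y, x = 2 ^ (k - j) * y := by
  obtain ⟨n, rfl⟩ := ZMod.natCast_zmod_surjective x
  have h1 : ((2 ^ j * n : ℕ) : ZMod (2 ^ k)) = 0 := by push_cast; exact h
  rw [ZMod.natCast_eq_zero_iff] at h1
  have h2 : 2 ^ (k - j) ∣ n := by
    have : 2 ^ k = 2 ^ j * 2 ^ (k - j) := by rw [← pow_add]; congr 1; omega
    rw [this] at h1
    exact Nat.dvd_of_mul_dvd_mul_left (by positivity) h1
  obtain ⟨m, rfl⟩ := h2
  exact ⟨m, by push_cast; rfl⟩

theorem ker_lem (hk : 1 ≤ k) (π : ZMod (2 ^ k) →+* ZMod 2) (x : ZMod (2 ^ k)) (h : π x = 0) :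
    ∃ y, x = 2 * y := by
  obtain ⟨n, rfl⟩ := ZMod.natCast_zmod_surjective x
  rw [map_natCast, ZMod.natCast_eq_zero_iff] at h
  obtain ⟨m, rfl⟩ := h
  exact ⟨m, by push_cast; rfl⟩

theorem two_eq_zero' (π : ZMod (2 ^ k) →+* ZMod 2) : π 2 = 0 := by
  rw [map_ofNat]; rfl

theorem pi_zero {j : ℕ} (hj : j < k) (π : ZMod (2 ^ k) →+* ZMod 2) (x : ZMod (2 ^ k))
    (h : 2 ^ j * x = 0) : π x = 0 := by
  obtain ⟨y, rfl⟩ := div_lem hj.le x h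
  rw [map_mul, map_pow, two_eq_zero', zero_pow (by omega), zero_mul]

theorem unit_lem (hk : 1 ≤ k) (π : ZMod (2 ^ k) →+* ZMod 2) (x : ZMod (2 ^ k)) (h : π x = 1) :
    IsUnit x := by
  obtain ⟨y, hy⟩ := ker_lem hk π (x - 1) (by simp [h])
  have : x = 1 + 2 * y := by rw [← hy]; ring
  rw [this]
  refine IsNilpotent.isUnit_one_add ⟨k, ?_⟩
  rw [mul_pow, two_pow_zero, zero_mul]

abbrev Mk (k : ℕ) := Matrix (Fin 2) (Fin 2) (ZMod (2 ^ k))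

theorem mdiv {j : ℕ} (hj : j ≤ k) (x : Mk k) (h : (2 : ZMod (2 ^ k)) ^ j • x = 0) :
    ∃ y : Mk k, x = (2 : ZMod (2 ^ k)) ^ (k - j) • y := by
  have : ∀ a b, ∃ y, x a b = 2 ^ (k - j) * y := fun a b =>
    div_lem hj _ (by simpa using congrFun (congrFun h a) b)
  choose f hf using this
  exact ⟨Matrix.of f, by ext a b; simp [hf a b]⟩

theorem mker (hk : 1 ≤ k) (π : ZMod (2 ^ k) →+* ZMod 2) (x : Mk k) (h : π.mapMatrix x = 0) :
    ∃ y : Mk k, x = (2 : ZMod (2 ^ k)) • y := by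
  have : ∀ a b, ∃ y, x a b = 2 * y := fun a b =>
    ker_lem hk π _ (by simpa using congrFun (congrFun h a) b)
  choose f hf using this
  exact ⟨Matrix.of f, by ext a b; simp [hf a b]⟩

theorem mpi {j : ℕ} (hj : j < k) (π : ZMod (2 ^ k) →+* ZMod 2) (x : Mk k)
    (h : (2 : ZMod (2 ^ k)) ^ j • x = 0) : π.mapMatrix x = 0 := by
  ext a b
  simpa using pi_zero hj π _ (by simpa using congrFun (congrFun h a) b)

theorem mpi_two (π : ZMod (2 ^ k) →+* ZMod 2) (x : Mk k) :
    π.mapMatrix ((2 : ZMod (2 ^ k)) • x) = 0 := by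
  ext a b
  simp [two_eq_zero' π]

theorem munit (hk : 1 ≤ k) (π : ZMod (2 ^ k) →+* ZMod 2) (x : Mk k) (h : π.mapMatrix x = 1) :
    IsUnit x := by
  rw [Matrix.isUnit_iff_isUnit_det]
  apply unit_lem hk π
  rw [RingHom.map_det, h, Matrix.det_one]

end arith

abbrev M2 := Matrix (Fin 2) (Fin 2) (ZMod 2)

theorem forall_M2 {p : M2 → Prop} (h : ∀ a b c d : ZMod 2, p !![a, b; c, d]) (M : M2) : p M := by
  have := h (M 0 0) (M 0 1) (M 1 0) (M 1 1)
  rwa [← Matrix.eta_fin_two M] at this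

theorem f2_step1 (T A : M2) : T ^ 3 = 1 → A ^ 2 = 1 → A * (T * A * T ^ 2) * (T ^ 2 * A * T) = 1 →
      A * (T * A * T ^ 2) = (T * A * T ^ 2) * A → A = 1 := by
  revert T A
  refine forall_M2 ?_
  intro a b c d
  refine forall_M2 ?_
  revert a b c d
  decide +kernel

theorem f2_step2 (T A : M2) : T ^ 3 = 1 → T ≠ 1 → A + A ^ 2 = 0 →
    A + (T * A * T ^ 2) + (T ^ 2 * A * T) = 0 → A = 0 := by
  revert T A
  refine forall_M2 ?_
  intro a b c d
  refine forall_M2 ?_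
  revert a b c d
  decide +kernel

set_option maxHeartbeats 1000000 in
set_option synthInstance.maxHeartbeats 400000 in
set_option synthInstance.maxSize 1000 in
theorem f2_step3 (T A : M2) : T ^ 3 = 1 → T ≠ 1 →
    A + (T * A * T ^ 2) + (T ^ 2 * A * T) = 0 →
    A = 0 ∨ A = !![1, 0; 1, 1] ∨ A = !![0, 1; 1, 0] ∨ A = !![1, 1; 0, 1] := by
  revert T A
  refine forall_M2 ?_
  intro a b c d
  refine forall_M2 ?_
  revert a b c d
  decide +kernel

theorem f2_step4 (T : M2) : T ^ 3 = 1 → T ≠ 1 → T 1 0 = 1 ∧ (T - 1).det = 1 := by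
  revert T
  refine forall_M2 ?_
  decide +kernel

section main

variable {k : ℕ}

/-- reduction mod 2 -/
def red (k : ℕ) (hk : 2 ≤ k) : ZMod (2 ^ k) →+* ZMod 2 :=
  ZMod.castHom (dvd_pow_self 2 (by omega)) (ZMod 2)

theorem t_red (hk : 2 ≤ k) (t : Mk k) (h3 : t ^ 3 = 1) (h1 : t ≠ 1) :
    (red k hk).mapMatrix t ≠ 1 := by
  intro h
  have hu : IsUnit (t ^ 2 + t + 1) := by
    apply munit (by omega) (red k hk)
    rw [map_add, map_add, map_pow, map_one, h]
    decide
  apply h1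
  have : (t ^ 2 + t + 1) * (t - 1) = 0 := by
    have : (t ^ 2 + t + 1) * (t - 1) = t ^ 3 - 1 := by noncomm_ring
    rw [this, h3, sub_self]
  exact sub_eq_zero.1 ((hu.mul_right_eq_zero).1 this)

theorem t_poly (hk : 2 ≤ k) (t : Mk k) (h3 : t ^ 3 = 1) (h1 : t ≠ 1) :
    t ^ 2 + t + 1 = 0 := by
  have hr := t_red hk t h3 h1
  have h4 := f2_step4 ((red k hk).mapMatrix t) (by rw [← map_pow, h3, map_one]) hr
  have hu : IsUnit (t - 1) := by
    rw [Matrix.isUnit_iff_isUnit_det]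
    apply unit_lem (by omega) (red k hk)
    rw [RingHom.map_det, map_sub, map_one]
    exact h4.2
  have : (t - 1) * (t ^ 2 + t + 1) = 0 := by
    have : (t - 1) * (t ^ 2 + t + 1) = t ^ 3 - 1 := by noncomm_ring
    rw [this, h3, sub_self]
  exact (hu.mul_right_eq_zero).1 this

/-- Expansion of the product `∏ (1 + c • tⁱ M t⁻ⁱ)`. -/
theorem prod_exp (c : ZMod (2 ^ k)) (t M : Mk k) (h3 : t ^ 3 = 1)
    (hp : (1 + c • M) * (t * (1 + c • M) * t ^ 2) * (t ^ 2 * (1 + c • M) * t) = 1) :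
    ∃ R : Mk k, c • ((M + t * M * t ^ 2 + t ^ 2 * M * t) + c • R) = 0 := by
  have e1 : t * (1 + c • M) * t ^ 2 = 1 + c • (t * M * t ^ 2) := by
    have : t * t ^ 2 = 1 := by rw [← h3]; noncomm_ring
    rw [mul_add, add_mul, mul_one, this]; simp
  have e2 : t ^ 2 * (1 + c • M) * t = 1 + c • (t ^ 2 * M * t) := by
    have : t ^ 2 * t = 1 := by rw [← h3]; noncomm_ring
    rw [mul_add, add_mul, mul_one, this]; simp
  rw [e1, e2] at hp
  generalize t * M * t ^ 2 = N at *
  generalize t ^ 2 * M * t = P at *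
  refine ⟨M * N + M * P + N * P + c • (M * N * P), ?_⟩
  rw [← sub_eq_zero] at hp
  rw [← hp]
  simp only [mul_add, add_mul, smul_add, mul_one, one_mul, smul_mul_assoc, mul_smul_comm, smul_smul]
  abel

theorem sq_exp (c : ZMod (2 ^ k)) (M : Mk k) (hp : (1 + c • M) ^ 2 = 1) :
    (2 * c) • M + (c * c) • M ^ 2 = 0 := by
  rw [← sub_eq_zero] at hp
  rw [← hp, pow_two, pow_two]
  simp only [mul_add, add_mul, smul_add, mul_one, one_mul, smul_mul_assoc, mul_smul_comm, smul_smul,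
    two_mul, add_smul]
  abel

/-- The step to `1 + 2^(k-1) P`. -/
theorem step_A (hk : 2 ≤ k) (t a : Mk k) (h3 : t ^ 3 = 1) (h1 : t ≠ 1) (ha : a ^ 2 = 1)
    (hp : a * (t * a * t ^ 2) * (t ^ 2 * a * t) = 1)
    (hc : a * (t * a * t ^ 2) = (t * a * t ^ 2) * a) :
    ∃ P : Mk k, a = 1 + (2 : ZMod (2 ^ k)) ^ (k - 1) • P := by
  set π := red k hk with hπ
  have hT3 : (π.mapMatrix t) ^ 3 = 1 := by rw [← map_pow, h3, map_one]
  have hT1 := t_red hk t h3 h1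
  have hA : π.mapMatrix a = 1 := by
    apply f2_step1 (π.mapMatrix t) (π.mapMatrix a) hT3
    · rw [← map_pow, ha, map_one]
    · simp only [← map_pow, ← map_mul]; rw [hp, map_one]
    · simp only [← map_pow, ← map_mul]; rw [hc]
  obtain ⟨M, hM⟩ := mker (by omega) π (a - 1) (by rw [map_sub, hA, map_one, sub_self])
  have haM : a = 1 + (2 : ZMod (2 ^ k)) • M := by rw [← hM]; abel
  by_cases hk2 : k = 2
  · subst hk2
    exact ⟨M, by simpa using haM⟩
  rw [haM] at hp ha
  obtain ⟨R, hR⟩ := prod_exp 2 t M h3 hp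
  have hs := mpi (j := 1) (by omega) π _ (by rw [pow_one]; exact hR)
  rw [map_add, mpi_two, add_zero] at hs
  have hsq := sq_exp 2 M ha
  have hidem := mpi (j := 2) (by omega) π (M + M ^ 2) (by
    rw [← hsq, smul_add, pow_two])
  have hM0 := f2_step2 (π.mapMatrix t) (π.mapMatrix M) hT3 hT1
    (by rw [← map_pow, ← map_add, hidem]) (by
      simp only [← map_pow, ← map_mul, ← map_add]; exact hs)
  obtain ⟨N, hN⟩ := mker (by omega) π M hM0
  rw [hN, smul_smul] at haM ha
  have hsq := sq_exp _ N ha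
  have hu : IsUnit (1 + (2 : ZMod (2 ^ k)) • N) :=
    munit (by omega) π _ (by rw [map_add, mpi_two, map_one, add_zero])
  have h8 : ((2 : ZMod (2 ^ k)) ^ 3 • N) * (1 + (2 : ZMod (2 ^ k)) • N) = 0 := by
    rw [← hsq, mul_add, mul_one, smul_mul_smul_comm, pow_two N]
    congr 2 <;> ring
  have h80 := (hu.mul_left_eq_zero).1 h8
  obtain ⟨P, hP⟩ := mdiv (j := 3) (by omega) N h80
  refine ⟨P, ?_⟩
  rw [haM, hP, smul_smul]
  congr 2
  have : k - 1 = (k - 3) + 2 := by omega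
  rw [this, pow_add]; ring

theorem q_mul_two (hk : 2 ≤ k) : (2 : ZMod (2 ^ k)) ^ (k - 1) * 2 = 0 := by
  rw [← pow_succ, show k - 1 + 1 = k by omega, two_pow_zero]

theorem q_sq (hk : 2 ≤ k) : (2 : ZMod (2 ^ k)) ^ (k - 1) * 2 ^ (k - 1) = 0 := by
  have : (2 : ZMod (2 ^ k)) ^ (k - 1) * 2 ^ (k - 1) = (2 ^ (k - 1) * 2) * 2 ^ (k - 2) := by
    rw [mul_assoc, ← pow_succ', show k - 2 + 1 = k - 1 by omega]
  rw [this, q_mul_two hk, zero_mul]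

theorem step_B (hk : 2 ≤ k) (t a : Mk k) (h3 : t ^ 3 = 1) (h1 : t ≠ 1) (ha : a ^ 2 = 1)
    (hp : a * (t * a * t ^ 2) * (t ^ 2 * a * t) = 1)
    (hc : a * (t * a * t ^ 2) = (t * a * t ^ 2) * a) :
    a = 1 ∨ a = !![1 + 2 ^ (k - 1), 0; 2 ^ (k - 1), 1 + 2 ^ (k - 1)] ∨
      a = !![1, 2 ^ (k - 1); 2 ^ (k - 1), 1] ∨
      a = !![1 + 2 ^ (k - 1), 2 ^ (k - 1); 0, 1 + 2 ^ (k - 1)] := by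
  obtain ⟨P, rfl⟩ := step_A hk t a h3 h1 ha hp hc
  set π := red k hk with hπ
  have hT3 : (π.mapMatrix t) ^ 3 = 1 := by rw [← map_pow, h3, map_one]
  have hT1 := t_red hk t h3 h1
  obtain ⟨R, hR⟩ := prod_exp _ t P h3 hp
  rw [smul_add, smul_smul, q_sq hk, zero_smul, add_zero] at hR
  have hs := mpi (by omega) π _ hR
  have key : ∀ Q : Mk k, π.mapMatrix P = π.mapMatrix Q →
      (2 : ZMod (2 ^ k)) ^ (k - 1) • P = (2 : ZMod (2 ^ k)) ^ (k - 1) • Q := by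
    intro Q hQ
    obtain ⟨y, hy⟩ := mker (by omega) π (P - Q) (by rw [map_sub, hQ, sub_self])
    rw [← sub_eq_zero, ← smul_sub, hy, smul_smul, q_mul_two hk, zero_smul]
  rcases f2_step3 (π.mapMatrix t) (π.mapMatrix P) hT3 hT1 (by
      simp only [← map_pow, ← map_mul, ← map_add]; exact hs) with h | h | h | h
  · left
    rw [key 0 (by rw [h, map_zero])]; simp
  · right; left
    rw [key !![1, 0; 1, 1] (by rw [h]; ext i j; fin_cases i <;> fin_cases j <;> simp)]
    ext i j; fin_cases i <;> fin_cases j <;> simp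
  · right; right; left
    rw [key !![0, 1; 1, 0] (by rw [h]; ext i j; fin_cases i <;> fin_cases j <;> simp)]
    ext i j; fin_cases i <;> fin_cases j <;> simp
  · right; right; right
    rw [key !![1, 1; 0, 1] (by rw [h]; ext i j; fin_cases i <;> fin_cases j <;> simp)]
    ext i j; fin_cases i <;> fin_cases j <;> simp

theorem conj_C (hk : 2 ≤ k) (t : Mk k) (h3 : t ^ 3 = 1) (h1 : t ≠ 1) :
    ∃ g : Matrix.GeneralLinearGroup (Fin 2) (ZMod (2 ^ k)),
      t * (g : Mk k) = (g : Mk k) * !![0, -1; 1, -1] := by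
  have hpoly := t_poly hk t h3 h1
  have h4 := f2_step4 ((red k hk).mapMatrix t) (by rw [← map_pow, h3, map_one]) (t_red hk t h3 h1)
  have hu : IsUnit (!![1, t 0 0; 0, t 1 0] : Mk k) := by
    rw [Matrix.isUnit_iff_isUnit_det]
    apply unit_lem (by omega) (red k hk)
    have := h4.1
    simp only [RingHom.mapMatrix_apply, Matrix.map_apply] at this
    simp [Matrix.det_fin_two, this]
  obtain ⟨g, hg⟩ := hu
  refine ⟨g, ?_⟩
  rw [hg]
  have p0 := congrFun (congrFun hpoly 0) 0
  have p1 := congrFun (congrFun hpoly 1) 0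
  simp [pow_two, Matrix.mul_apply, Fin.sum_univ_two] at p0 p1
  ext i j
  fin_cases i <;> fin_cases j <;> simp [Matrix.mul_apply, Fin.sum_univ_two]
  · linear_combination p0
  · linear_combination p1

/-- The data extracted from a subgroup isomorphic to `Alt(4)`. -/
theorem part_one (hk : 2 ≤ k)
    (H : Subgroup (Matrix.GeneralLinearGroup (Fin 2) (ZMod (2 ^ k))))
    (hH : Nonempty (↥H ≃* ↥(alternatingGroup (Fin 4)))) :
    Subgroup.map H.subtype (twoCore ↥H) =
      Subgroup.closure
        {u : Matrix.GeneralLinearGroup (Fin 2) (ZMod (2 ^ k)) |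
          (u : Matrix (Fin 2) (Fin 2) (ZMod (2 ^ k))) =
            !![1 + 2 ^ (k - 1), 0; 2 ^ (k - 1), 1 + 2 ^ (k - 1)] ∨
          (u : Matrix (Fin 2) (Fin 2) (ZMod (2 ^ k))) =
            !![1, 2 ^ (k - 1); 2 ^ (k - 1), 1]} ∧
    ∃ t ∈ H, t ^ 3 = 1 ∧ t ≠ 1 ∧ ∀ x ∈ H, ∃ w ∈ Subgroup.map H.subtype (twoCore ↥H), ∃ i : ℕ,
      x = w * t ^ i := by
  obtain ⟨φ⟩ := hH
  obtain ⟨τ, hτ3, hτ1, hdec, hrel⟩ := a4_facts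
  set s : H := φ.symm τ with hs
  have hφs : φ s = τ := by simp [hs]
  have s3 : s ^ 3 = 1 := by rw [hs, ← map_pow, hτ3, map_one]
  have s1 : s ≠ 1 := by
    intro h; apply hτ1; rw [← hφs, h, map_one]
  have hmem : ∀ w : H, w ∈ twoCore H ↔ w ^ 2 = 1 := mem_twoCore φ
  have srel : ∀ w : H, w ^ 2 = 1 → w * (s * w * s ^ 2) * (s ^ 2 * w * s) = 1 ∧
      w * (s * w * s ^ 2) = (s * w * s ^ 2) * w := by
    intro w hw
    obtain ⟨r1, r2⟩ := hrel (φ w) (by rw [← map_pow, hw, map_one])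
    rw [← hφs] at r1 r2
    simp only [← map_pow, ← map_mul] at r1 r2
    exact ⟨(map_eq_one_iff φ φ.injective).1 r1, φ.injective r2⟩
  let c : H →* Mk k := (Units.coeHom (Mk k)).comp H.subtype
  have cinj : Function.Injective c := Units.val_injective.comp Subtype.val_injective
  have cc : ∀ x : H, c x = ((x : Matrix.GeneralLinearGroup (Fin 2) (ZMod (2 ^ k))) : Mk k) :=
    fun x => rfl
  have hfour : ∀ w : H, w ^ 2 = 1 → c w ∈ ({1,
      !![1 + 2 ^ (k - 1), 0; 2 ^ (k - 1), 1 + 2 ^ (k - 1)],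
      !![1, 2 ^ (k - 1); 2 ^ (k - 1), 1],
      !![1 + 2 ^ (k - 1), 2 ^ (k - 1); 0, 1 + 2 ^ (k - 1)]} : Set (Mk k)) := by
    intro w hw
    obtain ⟨r1, r2⟩ := srel w hw
    have := step_B hk (c s) (c w) (by rw [← map_pow, s3, map_one])
      (by intro h; exact s1 (cinj (by rw [h, map_one])))
      (by rw [← map_pow, hw, map_one])
      (by simp only [← map_pow, ← map_mul]; rw [r1, map_one])
      (by simp only [← map_pow, ← map_mul]; rw [r2])
    simpa using this
  have hcard : (c '' {w : H | w ^ 2 = 1}).ncard = 4 := by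
    rw [Set.ncard_image_of_injective _ cinj, ← a4_count, ← Nat.card_eq_fintype_card,
      ← Nat.card_coe_set_eq]
    refine Nat.card_congr (φ.toEquiv.subtypeEquiv ?_)
    intro a
    change a ^ 2 = 1 ↔ (φ a) ^ 2 = 1
    rw [← map_pow, map_eq_one_iff φ φ.injective]
  have hle : ({1,
      !![1 + 2 ^ (k - 1), 0; 2 ^ (k - 1), 1 + 2 ^ (k - 1)],
      !![1, 2 ^ (k - 1); 2 ^ (k - 1), 1],
      !![1 + 2 ^ (k - 1), 2 ^ (k - 1); 0, 1 + 2 ^ (k - 1)]} : Set (Mk k)).ncard ≤ 4 := by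
    refine (Set.ncard_insert_le _ _).trans (Nat.succ_le_succ ?_)
    refine (Set.ncard_insert_le _ _).trans (Nat.succ_le_succ ?_)
    refine (Set.ncard_insert_le _ _).trans (Nat.succ_le_succ ?_)
    rw [Set.ncard_singleton]
  have heq := Set.eq_of_subset_of_ncard_le
    (show c '' {w : H | w ^ 2 = 1} ⊆ _ by rintro _ ⟨w, hw, rfl⟩; exact hfour w hw)
    (by rw [hcard]; exact hle) (by simp)
  have hback : ∀ m ∈ ({1,
      !![1 + 2 ^ (k - 1), 0; 2 ^ (k - 1), 1 + 2 ^ (k - 1)],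
      !![1, 2 ^ (k - 1); 2 ^ (k - 1), 1],
      !![1 + 2 ^ (k - 1), 2 ^ (k - 1); 0, 1 + 2 ^ (k - 1)]} : Set (Mk k)),
      ∃ w : H, w ^ 2 = 1 ∧ c w = m := by
    intro m hm
    rw [← heq] at hm
    exact hm
  have hq := q_sq hk
  have hq2 := q_mul_two hk
  refine ⟨?_, s, s.2, ?_, ?_, ?_⟩
  · apply le_antisymm
    · rintro _ ⟨w, hw, rfl⟩
      have hw2 := (hmem w).1 hw
      obtain ⟨u1, -, hu1⟩ := hback !![1 + 2 ^ (k - 1), 0; 2 ^ (k - 1), 1 + 2 ^ (k - 1)] (by simp)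
      obtain ⟨u2, -, hu2⟩ := hback !![1, 2 ^ (k - 1); 2 ^ (k - 1), 1] (by simp)
      rcases hfour w hw2 with h | h | h | h
      · have : w = 1 := cinj (by rw [h, map_one])
        rw [this, map_one]; exact one_mem _
      · exact Subgroup.subset_closure (Or.inl h)
      · exact Subgroup.subset_closure (Or.inr h)
      · have : w = u1 * u2 := cinj (by
          rw [h, map_mul, hu1, hu2]
          ext i j; fin_cases i <;> fin_cases j <;>
            simp [Matrix.mul_apply, Fin.sum_univ_two, add_mul, mul_add, hq]
          linear_combination -hq2)
        rw [this, map_mul]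
        exact mul_mem (Subgroup.subset_closure (Or.inl hu1)) (Subgroup.subset_closure (Or.inr hu2))
    · rw [Subgroup.closure_le]
      intro u hu
      obtain ⟨w, hw, hcw⟩ := hback (u : Mk k) (by rcases hu with h | h <;> rw [h] <;> simp)
      exact ⟨w, (hmem w).2 hw, Units.ext hcw⟩
  · have := congrArg H.subtype s3
    simpa using this
  · intro h; exact s1 (Subtype.ext h)
  · intro x hx
    obtain ⟨w, i, hw, hxw⟩ := hdec (φ ⟨x, hx⟩)
    refine ⟨H.subtype (φ.symm w), ⟨_, (hmem _).2 (by rw [← map_pow, hw, map_one]), rfl⟩, i, ?_⟩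
    have h5 : (⟨x, hx⟩ : H) = φ.symm w * s ^ (i : ℕ) := by
      apply φ.injective; rw [hxw]; simp [hφs]
    have := congrArg H.subtype h5
    simpa using this

end main

theorem O2_of_alt4_in_GL2 (k : ℕ) (hk : 2 ≤ k)
    (H : Subgroup (Matrix.GeneralLinearGroup (Fin 2) (ZMod (2 ^ k))))
    (hH : Nonempty (↥H ≃* ↥(alternatingGroup (Fin 4)))) :
    Subgroup.map H.subtype (twoCore ↥H) =
      Subgroup.closure
        {u : Matrix.GeneralLinearGroup (Fin 2) (ZMod (2 ^ k)) |
          (u : Matrix (Fin 2) (Fin 2) (ZMod (2 ^ k))) =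
            !![1 + 2 ^ (k - 1), 0; 2 ^ (k - 1), 1 + 2 ^ (k - 1)] ∨
          (u : Matrix (Fin 2) (Fin 2) (ZMod (2 ^ k))) =
            !![1, 2 ^ (k - 1); 2 ^ (k - 1), 1]} ∧
    ∀ H₁ H₂ : Subgroup (Matrix.GeneralLinearGroup (Fin 2) (ZMod (2 ^ k))),
      Nonempty (↥H₁ ≃* ↥(alternatingGroup (Fin 4))) →
      Nonempty (↥H₂ ≃* ↥(alternatingGroup (Fin 4))) →
      ∃ g : Matrix.GeneralLinearGroup (Fin 2) (ZMod (2 ^ k)), conjSub g H₁ = H₂ := by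
  refine ⟨(part_one hk H hH).1, ?_⟩
  intro H₁ H₂ h1 h2
  obtain ⟨e1, t1, ht1, t13, t11, -⟩ := part_one hk H₁ h1
  obtain ⟨e2, t2, ht2, t23, t21, hdec⟩ := part_one hk H₂ h2
  obtain ⟨g1, hg1⟩ := conj_C hk (t1 : Mk k) (by rw [← Units.val_pow_eq_pow_val, t13]; rfl)
    (fun h => t11 (Units.ext h))
  obtain ⟨g2, hg2⟩ := conj_C hk (t2 : Mk k) (by rw [← Units.val_pow_eq_pow_val, t23]; rfl)
    (fun h => t21 (Units.ext h))
  have hconj : (g2 * g1⁻¹) * t1 * (g2 * g1⁻¹)⁻¹ = t2 := by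
    have hx : g1⁻¹ * t1 * g1 = g2⁻¹ * t2 * g2 := by
      apply Units.ext
      have a1 : ((g1⁻¹ * t1 * g1 : Matrix.GeneralLinearGroup (Fin 2) (ZMod (2 ^ k))) : Mk k)
          = !![0, -1; 1, -1] := by
        rw [mul_assoc, Units.val_mul, Units.val_mul, hg1, ← mul_assoc, Units.inv_mul, one_mul]
      have a2 : ((g2⁻¹ * t2 * g2 : Matrix.GeneralLinearGroup (Fin 2) (ZMod (2 ^ k))) : Mk k)
          = !![0, -1; 1, -1] := by
        rw [mul_assoc, Units.val_mul, Units.val_mul, hg2, ← mul_assoc, Units.inv_mul, one_mul]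
      rw [a1, a2]
    calc (g2 * g1⁻¹) * t1 * (g2 * g1⁻¹)⁻¹ = g2 * (g1⁻¹ * t1 * g1) * g2⁻¹ := by group
      _ = t2 := by rw [hx]; group
  refine ⟨g2 * g1⁻¹, ?_⟩
  generalize g2 * g1⁻¹ = g at hconj
  have f : ↥H₁ ≃* ↥(conjSub g H₁) :=
    H₁.equivMapOfInjective _ (MulAut.conj g).injective
  have h3 : Nonempty (↥(conjSub g H₁) ≃* ↥(alternatingGroup (Fin 4))) :=
    ⟨f.symm.trans h1.some⟩
  have e3 := (part_one hk (conjSub g H₁) h3).1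
  have hle : H₂ ≤ conjSub g H₁ := by
    intro x hx
    obtain ⟨w, hw, i, rfl⟩ := hdec x hx
    refine mul_mem ?_ (pow_mem ?_ i)
    · rw [e2, ← e3] at hw
      exact Subgroup.map_subtype_le _ hw
    · exact ⟨t1, ht1, hconj⟩
  haveI : Finite ↥(conjSub g H₁) := Finite.of_equiv _ h3.some.symm.toEquiv
  symm
  apply Subgroup.eq_of_le_of_card_ge hle
  rw [Nat.card_congr h3.some.toEquiv, Nat.card_congr h2.some.toEquiv]
end
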